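/- arXiv:1608.00790 — 2 statements merged into one kernel-verified Lean document; each statement's English description precedes it below -/
import Mathlib

section
/- Let $f:\mathbb{D}\to\mathbb{D}$ be an injective holomorphic map with $f(0)=0$ and let $w\in\mathbb{D}\setminus\{0\}$. Then $\frac{|w|\,|f'(0)|}{(1+|w|)^2} \leq \frac{|f(w)|}{(1+|f(w)|)^2}$ (lower Pick growth bound for bounded univalent functions). -/
open Complex Metric

section UnivalentFunctions

open Real MeasureTheory Set Filter Topology

lemma Complex.abs_det_restrictScalars_toSpanSingleton (a : ℂ) :
    |((ContinuousLinearMap.toSpanSingleton ℂ a).restrictScalars ℝ).det| = ‖a‖ ^ 2 := by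
  simp [ContinuousLinearMap.det, LinearMap.det_restrictScalars,
    Algebra.norm_complex_eq, Complex.normSq_eq_norm_sq]

/-- Change of variables for the logarithmic area `dA / ‖ζ‖ ^ 2`. -/
lemma Complex.lintegral_image_inv_norm_sq {h h' : ℂ → ℂ} {S : Set ℂ} (hS : MeasurableSet S)
    (hh : ∀ z ∈ S, HasDerivAt h (h' z) z) (hi : InjOn h S) :
    ∫⁻ ζ in h '' S, ENNReal.ofReal (‖ζ‖ ^ 2)⁻¹ = ∫⁻ z in S, ENNReal.ofReal (‖h' z / h z‖ ^ 2) := by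
  rw [lintegral_image_eq_lintegral_abs_det_fderiv_mul volume hS
    (fun z hz ↦ ((hh z hz).hasFDerivAt.restrictScalars ℝ).hasFDerivWithinAt) hi]
  refine lintegral_congr fun z ↦ ?_
  rw [Complex.abs_det_restrictScalars_toSpanSingleton, ← ENNReal.ofReal_mul (by positivity),
    norm_div, div_pow, div_eq_mul_inv]

lemma Complex.measurableSet_reProdIm {s t : Set ℝ} (hs : MeasurableSet s) (ht : MeasurableSet t) :
    MeasurableSet (s ×ℂ t) :=
  (measurable_re hs).inter (measurable_im ht)

lemma Complex.lintegral_reProdIm {s t : Set ℝ}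
    {g : ℂ → ENNReal} (hg : AEMeasurable g (volume.restrict (s ×ℂ t))) :
    ∫⁻ z in s ×ℂ t, g z = ∫⁻ x in s, ∫⁻ y in t, g (x + y * I) := by
  have hmp := (Complex.volume_preserving_equiv_real_prod.symm).restrict_preimage_emb
    (Complex.measurableEquivRealProd.symm.measurableEmbedding) (s ×ℂ t)
  have hpre : Complex.measurableEquivRealProd.symm ⁻¹' (s ×ℂ t) = s ×ˢ t := by
    ext ⟨x, y⟩; simp [Complex.mem_reProdIm]
  rw [hpre] at hmp
  rw [← hmp.lintegral_comp_emb (Complex.measurableEquivRealProd.symm.measurableEmbedding)]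
  have hg' := hg.comp_quasiMeasurePreserving hmp.quasiMeasurePreserving
  rw [Measure.volume_eq_prod, ← Measure.prod_restrict] at hg' ⊢
  refine (lintegral_prod _ hg').trans ?_
  simp [Complex.mk_eq_add_mul_I]

/-- The mean square of a holomorphic function with value `1` at the centre is at least `1`. -/
lemma Complex.two_pi_le_lintegral_norm_sq_circleMap {H : ℂ → ℂ}
    (hH : DifferentiableOn ℂ H (ball 0 1)) (h0 : H 0 = 1) {ρ : ℝ} (hρ : 0 ≤ ρ) (hρ1 : ρ < 1) :
    ENNReal.ofReal (2 * π) ≤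
      ∫⁻ y in Ioc (-π) π, ENNReal.ofReal (‖H (circleMap 0 ρ y)‖ ^ 2) := by
  have hc : Continuous fun y : ℝ ↦ H (circleMap 0 ρ y) :=
    hH.continuousOn.comp_continuous (continuous_circleMap 0 ρ) fun y ↦ by
      simpa [abs_of_nonneg hρ] using hρ1
  have hmean : circleAverage H 0 ρ = 1 := by
    rw [← h0]
    refine DiffContOnCl.circleAverage (hH.mono ?_).diffContOnCl
    refine closure_ball_subset_closedBall.trans (closedBall_subset_ball ?_)
    rwa [abs_of_nonneg hρ]
  rw [circleAverage_eq_integral_add (-π), intervalIntegral.integral_comp_add_right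
    (fun θ ↦ H (circleMap 0 ρ θ)), show 0 + -π = -π by ring, show 2 * π + -π = π by ring] at hmean
  have hpi : (0 : ℝ) < 2 * π := by positivity
  have hint : ∫ θ in -π..π, H (circleMap 0 ρ θ) = ((2 * π : ℝ) : ℂ) := by
    have := congrArg (fun z ↦ (2 * π : ℝ) • z) hmean
    simpa only [smul_smul, mul_inv_cancel₀ hpi.ne', one_smul, real_smul (z := 1), mul_one]
      using this
  have hre : ∫ θ in -π..π, (H (circleMap 0 ρ θ)).re = 2 * π := by
    have := intervalIntegral.intervalIntegral_re (𝕜 := ℂ) (μ := volume)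
      (hc.intervalIntegrable (-π) π)
    simp only [RCLike.re_to_complex] at this
    rw [this, hint, ofReal_re]
  have hcre : Continuous fun θ ↦ 2 * (H (circleMap 0 ρ θ)).re :=
    continuous_const.mul (continuous_re.comp hc)
  have hcnorm : Continuous fun θ ↦ ‖H (circleMap 0 ρ θ)‖ ^ 2 := hc.norm.pow 2
  have hle : (-π : ℝ) ≤ π := by linarith
  have key : 2 * π ≤ ∫ θ in -π..π, ‖H (circleMap 0 ρ θ)‖ ^ 2 := by
    calc 2 * π = ∫ θ in -π..π, (2 * (H (circleMap 0 ρ θ)).re - 1) := by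
          rw [intervalIntegral.integral_sub, intervalIntegral.integral_const_mul, hre]
          · simp; ring
          · exact hcre.intervalIntegrable _ _
          · simp
      _ ≤ _ := by
          refine intervalIntegral.integral_mono_on hle
            ((hcre.sub continuous_const).intervalIntegrable _ _)
            (hcnorm.intervalIntegrable _ _) fun θ _ ↦ ?_
          rw [← Complex.normSq_eq_norm_sq, Complex.normSq_apply]
          nlinarith [sq_nonneg ((H (circleMap 0 ρ θ)).re - 1), sq_nonneg (H (circleMap 0 ρ θ)).im]
  rw [intervalIntegral.integral_of_le hle] at key
  rw [← ofReal_integral_eq_lintegral_ofReal]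
  · exact ENNReal.ofReal_le_ofReal key
  · exact hcnorm.integrableOn_Icc.mono_set Ioc_subset_Icc_self
  · exact ae_of_all _ fun _ ↦ by positivity

lemma HasStrictDerivAt.eventually_ball_subset_image {𝕜 : Type*} [NontriviallyNormedField 𝕜]
    [CompleteSpace 𝕜] {q : 𝕜 → 𝕜} {a x : 𝕜} (hq : HasStrictDerivAt q a x)
    {c : ℝ} (hc : 0 < c) (hca : c < ‖a‖) :
    ∀ᶠ ε in 𝓝[>] (0 : ℝ), ball (q x) (c * ε) ⊆ q '' ball x ε := by
  have ha : a ≠ 0 := norm_pos_iff.1 (hc.trans hca)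
  have hF := hq.hasStrictFDerivAt_equiv ha
  set g := hq.localInverse q a x ha with hg
  have hgx : g (q x) = x := hF.localInverse_apply_image
  have hinv := (hq.to_localInverse ha).hasStrictFDerivAt
  obtain ⟨s, hs, hlip⟩ := hinv.exists_lipschitzOnWith_of_nnnorm_lt c.toNNReal⁻¹ (by
      rw [← NNReal.coe_lt_coe]
      simpa [hc.le] using inv_strictAnti₀ hc hca)
  obtain ⟨r, hr, hball⟩ := Metric.mem_nhds_iff.1 (Filter.inter_mem hs hF.eventually_right_inverse)
  filter_upwards [Ioo_mem_nhdsGT (show 0 < r / c by positivity)] with ε ⟨hε, hεr⟩ y hy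
  rw [lt_div_iff₀' hc] at hεr
  have hy' := hball (ball_subset_ball hεr.le hy)
  refine ⟨g y, ?_, hy'.2⟩
  have hd := hlip.dist_le_mul y hy'.1 (q x) (mem_of_mem_nhds hs)
  rw [← hg, hgx] at hd
  refine hd.trans_lt ?_
  rw [mem_ball] at hy
  rwa [NNReal.coe_inv, Real.coe_toNNReal _ hc.le, inv_mul_lt_iff₀ hc]

/-- The image of the annulus `exp L < ‖z‖ < 1` under a univalent function fixing `0` has logarithmic
area at least `2 * π * (-L)`. -/
lemma Complex.le_lintegral_norm_sq_logDeriv_comp_exp {q : ℂ → ℂ}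
    (hq : DifferentiableOn ℂ q (ball 0 1)) (h0 : q 0 = 0) (hinj : InjOn q (ball 0 1))
    (hq' : deriv q 0 ≠ 0) (L : ℝ) :
    ENNReal.ofReal (2 * π) * ENNReal.ofReal (-L) ≤
      ∫⁻ z in Ioo L 0 ×ℂ Ioc (-π) π,
        ENNReal.ofReal (‖deriv q (exp z) * exp z / q (exp z)‖ ^ 2) := by
  have h0mem : (0 : ℂ) ∈ ball (0 : ℂ) 1 := mem_ball_self one_pos
  have hne : ∀ z ∈ ball (0 : ℂ) 1, dslope q 0 z ≠ 0 := by
    intro z hz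
    by_cases hz0 : z = 0
    · simpa [hz0] using hq'
    · rw [dslope_of_ne _ hz0, slope_def_field, h0, sub_zero, sub_zero]
      exact div_ne_zero (fun h ↦ hz0 (hinj hz h0mem (h.trans h0.symm))) hz0
  set H : ℂ → ℂ := fun z ↦ deriv q z / dslope q 0 z with hHdef
  have hH : DifferentiableOn ℂ H (ball 0 1) :=
    (hq.deriv isOpen_ball).div ((differentiableOn_dslope (ball_mem_nhds _ one_pos)).2 hq) hne
  have hH0 : H 0 = 1 := by simp [hHdef, hq']
  have hexp : ∀ z ∈ Ioo L 0 ×ℂ Ioc (-π) π, exp z ∈ ball (0 : ℂ) 1 := by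
    intro z hz
    simpa [norm_exp] using hz.1.2
  have hHexp : ∀ z : ℂ, deriv q (exp z) * exp z / q (exp z) = H (exp z) := by
    intro z
    simp only [hHdef]
    rw [dslope_of_ne _ (exp_ne_zero z), slope_def_field, h0, sub_zero, sub_zero, div_div_eq_mul_div]
  simp_rw [hHexp]
  have hms : MeasurableSet (Ioo L 0 ×ℂ Ioc (-π) π) :=
    Complex.measurableSet_reProdIm measurableSet_Ioo measurableSet_Ioc
  rw [Complex.lintegral_reProdIm]
  · calc ENNReal.ofReal (2 * π) * ENNReal.ofReal (-L)
        = ∫⁻ _ in Ioo L 0, ENNReal.ofReal (2 * π) := by simp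
      _ ≤ _ := by
        refine setLIntegral_mono' measurableSet_Ioo fun x hx ↦ ?_
        refine (Complex.two_pi_le_lintegral_norm_sq_circleMap hH hH0 (Real.exp_pos x).le
          (Real.exp_lt_one_iff.2 hx.2)).trans_eq ?_
        simp [circleMap, Complex.exp_add]
  · refine ContinuousOn.aemeasurable ?_ hms
    refine ENNReal.continuous_ofReal.comp_continuousOn ?_
    exact ((hH.continuousOn.comp Complex.continuous_exp.continuousOn hexp).norm).pow 2

/-- Univalent Bieberbach–Eilenberg functions have derivative at most `1` at the origin. -/
theorem Complex.norm_deriv_le_one_of_mul_ne_one {q : ℂ → ℂ}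
    (hq : DifferentiableOn ℂ q (ball 0 1)) (h0 : q 0 = 0) (hinj : InjOn q (ball 0 1))
    (hmul : ∀ z ∈ ball (0 : ℂ) 1, ∀ w ∈ ball (0 : ℂ) 1, q z * q w ≠ 1) : ‖deriv q 0‖ ≤ 1 := by
  by_contra! hb
  obtain ⟨c, hc1, hc⟩ := exists_between hb
  have h0mem : (0 : ℂ) ∈ ball (0 : ℂ) 1 := mem_ball_self one_pos
  have hc0 : 0 < c := one_pos.trans hc1
  have hstrict : HasStrictDerivAt q (deriv q 0) 0 :=
    (hq.analyticAt (ball_mem_nhds _ one_pos)).hasStrictDerivAt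
  obtain ⟨ε, hball, hε0, hεc⟩ := ((hstrict.eventually_ball_subset_image hc0 hc).and
    (Ioo_mem_nhdsGT (show 0 < 1 / c by positivity))).exists
  rw [lt_div_iff₀' hc0] at hεc
  rw [h0] at hball
  have hεm : ε < c * ε := by nlinarith
  have hε1 : ε < 1 := hεm.trans hεc
  set m := c * ε with hm
  have hm0 : 0 < m := hε0.trans hεm
  have hlog : Real.log ε < Real.log m := Real.log_lt_log hε0 hεm
  have hlogm : Real.log m < 0 := Real.log_neg hm0 hεc
  set S := Ioo (Real.log ε) 0 ×ℂ Ioc (-π) π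
  set T := Icc (Real.log m) (-Real.log m) ×ℂ Ioc (-π) π with hT
  have hSm : MeasurableSet S := Complex.measurableSet_reProdIm measurableSet_Ioo measurableSet_Ioc
  have hTm : MeasurableSet T := Complex.measurableSet_reProdIm measurableSet_Icc measurableSet_Ioc
  have hexp1 : ∀ z ∈ S, exp z ∈ ball (0 : ℂ) 1 := fun z hz ↦ by
    simpa [norm_exp] using hz.1.2
  have hexpε : ∀ z ∈ S, ε < ‖exp z‖ := fun z hz ↦ by
    rw [norm_exp, ← Real.log_lt_iff_lt_exp hε0]
    exact hz.1.1
  have hexpinj : ∀ R : Set ℝ, InjOn exp (R ×ℂ Ioc (-π) π) := fun _ z hz w hw h ↦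
    exp_inj_of_neg_pi_lt_of_le_pi hz.2.1 hz.2.2 hw.2.1 hw.2.2 h
  set Q : ℂ → ℂ := fun z ↦ q (exp z) with hQ
  have hQinj : InjOn Q S := fun z hz w hw h ↦
    hexpinj _ hz hw (hinj (hexp1 z hz) (hexp1 w hw) h)
  have hQm : ∀ z ∈ S, m ≤ ‖Q z‖ := by
    intro z hz
    by_contra! hlt
    obtain ⟨w, hw, hwz⟩ := hball (mem_ball_zero_iff.2 hlt)
    have hwz' := hinj (ball_subset_ball hε1.le hw) (hexp1 z hz) hwz
    rw [hwz', mem_ball_zero_iff] at hw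
    exact (hexpε z hz).not_gt hw
  have hQ0 : ∀ z ∈ S, Q z ≠ 0 := fun z hz ↦ norm_pos_iff.1 (hm0.trans_le (hQm z hz))
  have hQM : ∀ z ∈ S, ‖Q z‖ ≤ m⁻¹ := by
    intro z hz
    by_contra! hlt
    have hlt' : ‖(Q z)⁻¹‖ < m := by
      rw [norm_inv]
      exact inv_lt_of_inv_lt₀ hm0 hlt
    obtain ⟨w, hw, hwz⟩ := hball (mem_ball_zero_iff.2 hlt')
    refine hmul z.exp (hexp1 z hz) w (ball_subset_ball hε1.le hw) ?_
    rw [hwz]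
    exact mul_inv_cancel₀ (hQ0 z hz)
  have hQd : ∀ z ∈ S, HasDerivAt Q (deriv q (exp z) * exp z) z := fun z hz ↦
    ((hq.differentiableAt (isOpen_ball.mem_nhds (hexp1 z hz))).hasDerivAt).comp z
      (Complex.hasDerivAt_exp z)
  have hQid : ∀ z ∈ S, HasDerivAt (fun z ↦ (Q z)⁻¹) (-(deriv q (exp z) * exp z) / Q z ^ 2) z :=
    fun z hz ↦ (hQd z hz).inv (hQ0 z hz)
  have hQiinj : InjOn (fun z ↦ (Q z)⁻¹) S := fun z hz w hw h ↦ hQinj hz hw (inv_injective h)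
  have hlow := Complex.le_lintegral_norm_sq_logDeriv_comp_exp hq h0 hinj
    (norm_pos_iff.1 (one_pos.trans hb)) (Real.log ε)
  have hI := Complex.lintegral_image_inv_norm_sq hSm hQd hQinj
  have hIi := Complex.lintegral_image_inv_norm_sq hSm hQid hQiinj
  have hIeq : ∫⁻ z in S, ENNReal.ofReal (‖-(deriv q (exp z) * exp z) / Q z ^ 2 / (Q z)⁻¹‖ ^ 2) =
      ∫⁻ z in S, ENNReal.ofReal (‖deriv q (exp z) * exp z / Q z‖ ^ 2) := by
    refine setLIntegral_congr_fun hSm fun z hz ↦ ?_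
    have := hQ0 z hz
    have h : -(deriv q (exp z) * exp z) / Q z ^ 2 / (Q z)⁻¹ = -(deriv q (exp z) * exp z / Q z) := by
      field_simp
    simp only [h, norm_neg]
  have hIT := Complex.lintegral_image_inv_norm_sq hTm (fun z _ ↦ Complex.hasDerivAt_exp z)
    (hexpinj _)
  have hTvol : ∫⁻ z in T, ENNReal.ofReal (‖exp z / exp z‖ ^ 2) =
      ENNReal.ofReal (2 * π) * ENNReal.ofReal (2 * -Real.log m) := by
    simp only [div_self (exp_ne_zero _), norm_one, one_pow]
    rw [hT, Complex.lintegral_reProdIm (by fun_prop)]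
    simp only [lintegral_const, Measure.restrict_apply_univ, Real.volume_Icc, Real.volume_Ioc,
      ENNReal.ofReal_one, one_mul]
    congr 2 <;> ring
  have hmeas : MeasurableSet ((fun z ↦ (Q z)⁻¹) '' S) :=
    hSm.image_of_continuousOn_injOn
      (fun z hz ↦ (hQid z hz).continuousAt.continuousWithinAt) hQiinj
  have hdisj : Disjoint (Q '' S) ((fun z ↦ (Q z)⁻¹) '' S) := by
    rw [Set.disjoint_left]
    rintro _ ⟨z, hz, rfl⟩ ⟨w, hw, hwz⟩
    refine hmul _ (hexp1 w hw) _ (hexp1 z hz) ?_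
    change Q w * Q z = 1
    rw [← hwz]
    exact mul_inv_cancel₀ (hQ0 w hw)
  have hexpT : ∀ ζ : ℂ, m ≤ ‖ζ‖ → ‖ζ‖ ≤ m⁻¹ → ζ ∈ exp '' T := by
    intro ζ h1 h2
    have hζ := hm0.trans_le h1
    refine ⟨log ζ, ⟨⟨?_, ?_⟩, neg_pi_lt_log_im ζ, log_im_le_pi ζ⟩, exp_log (norm_pos_iff.1 hζ)⟩
    · rw [log_re]
      exact Real.log_le_log hm0 h1
    · rw [log_re, ← Real.log_inv]
      exact Real.log_le_log hζ h2
  have hsub : Q '' S ∪ (fun z ↦ (Q z)⁻¹) '' S ⊆ exp '' T := by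
    rintro _ (⟨z, hz, rfl⟩ | ⟨z, hz, rfl⟩)
    · exact hexpT _ (hQm z hz) (hQM z hz)
    · refine hexpT _ ?_ ?_ <;> rw [norm_inv]
      · exact (le_inv_comm₀ (hm0.trans_le (hQm z hz)) hm0).1 (hQM z hz)
      · exact inv_anti₀ hm0 (hQm z hz)
  have hmono := lintegral_mono_set (μ := volume) (f := fun ζ : ℂ ↦ ENNReal.ofReal (‖ζ‖ ^ 2)⁻¹) hsub
  rw [lintegral_union hmeas hdisj, hI, hIi, hIeq, hIT, hTvol] at hmono
  have hfin := (add_le_add hlow hlow).trans hmono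
  rw [← ENNReal.ofReal_mul (by positivity), ← ENNReal.ofReal_mul (by positivity),
    ← ENNReal.ofReal_add (by nlinarith [Real.pi_pos]) (by nlinarith [Real.pi_pos]),
    ENNReal.ofReal_le_ofReal_iff (by nlinarith [Real.pi_pos])] at hfin
  nlinarith [Real.pi_pos]

lemma Complex.exists_differentiableOn_sq_eq {g : ℂ → ℂ} (hg : DifferentiableOn ℂ g (ball 0 1))
    (hne : ∀ z ∈ ball (0 : ℂ) 1, g z ≠ 0) (h0 : g 0 = 1) :
    ∃ s : ℂ → ℂ, DifferentiableOn ℂ s (ball 0 1) ∧ s 0 = 1 ∧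
      ∀ z ∈ ball (0 : ℂ) 1, s z ^ 2 = g z := by
  obtain ⟨F, hF0, hF⟩ := (((hg.deriv isOpen_ball).div hg hne).isExactOn_ball).with_val_at 0 0
  have hgd : ∀ z ∈ ball (0 : ℂ) 1, HasDerivAt g (deriv g z) z := fun z hz ↦
    (hg.differentiableAt (isOpen_ball.mem_nhds hz)).hasDerivAt
  have hP : ∀ z ∈ ball (0 : ℂ) 1, HasDerivAt (fun z ↦ g z * exp (-F z)) 0 z := by
    intro z hz
    convert! (hgd z hz).mul (hF z hz).neg.cexp using 1
    have := hne z hz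
    simp only [Pi.div_apply, Pi.neg_apply]
    field_simp
    ring
  refine ⟨fun z ↦ exp (F z / 2), fun z hz ↦ ?_, by simp [hF0], fun z hz ↦ ?_⟩
  · exact ((hF z hz).div_const 2).cexp.differentiableAt.differentiableWithinAt
  · have hconst := isOpen_ball.is_const_of_deriv_eq_zero
      (convex_ball (0 : ℂ) 1).isPreconnected
      (fun z hz ↦ (hP z hz).differentiableAt.differentiableWithinAt)
      (fun z hz ↦ (hP z hz).deriv) hz (mem_ball_self one_pos)
    simp only [h0, hF0, neg_zero, Complex.exp_zero, mul_one] at hconst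
    rw [← Complex.exp_nat_mul]
    rw [Complex.exp_neg, ← div_eq_mul_inv, div_eq_one_iff_eq (exp_ne_zero _)] at hconst
    rw [hconst]
    congr 1
    push_cast
    ring

/-- The **Koebe quarter theorem**. -/
theorem Complex.norm_deriv_le_four_mul_norm_of_forall_ne {g : ℂ → ℂ}
    (hg : DifferentiableOn ℂ g (ball 0 1)) (h0 : g 0 = 0) (hinj : InjOn g (ball 0 1)) {c : ℂ}
    (hc : ∀ z ∈ ball (0 : ℂ) 1, g z ≠ c) : ‖deriv g 0‖ ≤ 4 * ‖c‖ := by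
  have h0mem : (0 : ℂ) ∈ ball (0 : ℂ) 1 := mem_ball_self one_pos
  have hc0 : c ≠ 0 := fun h ↦ hc 0 h0mem (h0.trans h.symm)
  obtain ⟨s, hs, hs0, hsq⟩ := Complex.exists_differentiableOn_sq_eq
    (g := fun z ↦ 1 - g z / c) ((hg.div_const c).const_sub 1)
    (fun z hz h ↦ hc z hz (by rwa [sub_eq_zero, eq_comm, div_eq_one_iff_eq hc0] at h))
    (by simp [h0])
  have hsg : ∀ z ∈ ball (0 : ℂ) 1, g z = c * (1 - s z ^ 2) := by
    intro z hz
    rw [hsq z hz]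
    field_simp
    ring
  have hsinj : ∀ z ∈ ball (0 : ℂ) 1, ∀ w ∈ ball (0 : ℂ) 1, s z ^ 2 = s w ^ 2 → z = w := by
    intro z hz w hw h
    exact hinj hz hw (by rw [hsg z hz, hsg w hw, h])
  have hs1 : ∀ z ∈ ball (0 : ℂ) 1, s z + 1 ≠ 0 := by
    intro z hz h
    have hz1 : s z = -1 := eq_neg_of_add_eq_zero_left h
    have := hsinj z hz 0 h0mem (by rw [hz1, hs0]; norm_num)
    rw [this, hs0] at hz1
    norm_num at hz1
  have hq : ‖deriv (fun z ↦ (s z - 1) / (s z + 1)) 0‖ ≤ 1 := by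
    refine Complex.norm_deriv_le_one_of_mul_ne_one ((hs.sub_const 1).div (hs.add_const 1) hs1)
      (by simp [hs0]) ?_ ?_
    · intro z hz w hw h
      have h1 := hs1 z hz
      have h2 := hs1 w hw
      refine hsinj z hz w hw ?_
      rw [div_eq_div_iff h1 h2] at h
      linear_combination (s z + s w) / 2 * h
    · intro z hz w hw h
      have h1 := hs1 z hz
      have h2 := hs1 w hw
      rw [div_mul_div_comm, div_eq_one_iff_eq (mul_ne_zero h1 h2)] at h
      have hsum : s z = -s w := by linear_combination -h / 2
      have hzw := hsinj z hz w hw (by rw [hsum, neg_sq])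
      have hz0 : s z = 0 := by
        rw [← hzw] at hsum
        linear_combination hsum / 2
      exact hc z hz (by rw [hsg z hz, hz0]; ring)
  have hsd : HasDerivAt s (deriv s 0) 0 :=
    (hs.differentiableAt (isOpen_ball.mem_nhds h0mem)).hasDerivAt
  have hqd := (hsd.sub_const 1).div (hsd.add_const 1) (hs1 0 h0mem)
  have hgd : HasDerivAt g (c * (-(2 * s 0 * deriv s 0))) 0 := by
    have h := ((hsd.pow 2).const_sub 1).const_mul c
    refine (h.congr_of_eventuallyEq ?_).congr_deriv ?_
    · filter_upwards [isOpen_ball.mem_nhds h0mem] with z hz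
      exact hsg z hz
    · simp
  have hqd' : deriv (fun z ↦ (s z - 1) / (s z + 1)) 0 = deriv s 0 / 2 := by
    refine hqd.deriv.trans ?_
    rw [hs0]
    ring
  rw [hqd', norm_div, Complex.norm_ofNat] at hq
  rw [hgd.deriv, hs0, norm_mul, norm_neg, mul_one, norm_mul, Complex.norm_ofNat]
  nlinarith [norm_nonneg c]

lemma Complex.re_one_sub_div_one_add_pos_iff {z : ℂ} (hz : 1 + z ≠ 0) :
    0 < ((1 - z) / (1 + z)).re ↔ z ∈ ball (0 : ℂ) 1 := by
  have hpos : 0 < normSq (1 + z) := normSq_pos.2 hz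
  rw [mem_ball_zero_iff, ← sq_lt_one_iff₀ (norm_nonneg z), ← normSq_eq_norm_sq, div_re, ← add_div,
    div_pos_iff_of_pos_right hpos, normSq_apply]
  simp only [sub_re, one_re, add_re, sub_im, one_im, add_im]
  constructor <;> intro h <;> nlinarith

lemma Complex.one_add_ne_zero_of_mem_ball {z : ℂ} (hz : z ∈ ball (0 : ℂ) 1) : 1 + z ≠ 0 :=
  slitPlane_ne_zero (mem_slitPlane_of_norm_lt_one (mem_ball_zero_iff.1 hz))

lemma Complex.one_add_ne_zero_of_re_pos {z : ℂ} (hz : 0 < z.re) : 1 + z ≠ 0 := fun h ↦ by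
  have := congrArg re h
  simp at this
  linarith

lemma Complex.one_sub_div_one_add_injOn {z w : ℂ} (hz : 1 + z ≠ 0) (hw : 1 + w ≠ 0)
    (h : (1 - z) / (1 + z) = (1 - w) / (1 + w)) : z = w := by
  rw [div_eq_div_iff hz hw] at h
  linear_combination -h / 2

lemma Complex.re_exp_log_div_two_pos {z : ℂ} (hz : z ∈ slitPlane) : 0 < (exp (log z / 2)).re := by
  have h1 := neg_pi_lt_log_im z
  have h2 : (log z).im < π := (log_im_le_pi z).lt_of_ne (by
    rw [log_im]
    exact slitPlane_arg_ne_pi hz)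
  have him : (log z / 2).im = (log z).im / 2 := by simp
  rw [exp_re, him]
  exact mul_pos (Real.exp_pos _) (Real.cos_pos_of_mem_Ioo ⟨by linarith, by linarith⟩)

/-- A univalent map from the unit disc into the unit disc slit along `[r, 1)`. -/
lemma Complex.exists_injOn_mapsTo_ball_forall_ne {r : ℝ} (hr0 : 0 < r) (hr1 : r < 1) :
    ∃ φ : ℂ → ℂ, DifferentiableOn ℂ φ (ball 0 1) ∧ MapsTo φ (ball 0 1) (ball 0 1) ∧
      InjOn φ (ball 0 1) ∧ φ 0 = 0 ∧ (∀ z ∈ ball (0 : ℂ) 1, φ z ≠ r) ∧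
      deriv φ 0 = 4 * r / (1 + r) ^ 2 := by
  have h0mem : (0 : ℂ) ∈ ball (0 : ℂ) 1 := mem_ball_self one_pos
  have hadd {z : ℂ} (hz : z ∈ ball (0 : ℂ) 1) := Complex.one_add_ne_zero_of_mem_ball hz
  have hrball : (r : ℂ) ∈ ball (0 : ℂ) 1 := by simpa [abs_of_pos hr0] using hr1
  have hr1' := hadd hrball
  set t : ℝ := (1 - r) / (1 + r) with ht
  have ht0 : 0 < t := div_pos (by linarith) (by linarith)
  have ht1 : t < 1 := (div_lt_one (by linarith)).2 (by linarith)
  have htC : (t : ℂ) = (1 - r) / (1 + r) := by simp [ht]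
  have hl : 0 < 1 - t ^ 2 := by nlinarith
  have hlC : (1 - (t : ℂ) ^ 2) ≠ 0 := by exact_mod_cast hl.ne'
  set m : ℂ → ℂ := fun z ↦ (1 - z) / (1 + z) with hm
  have hmre : ∀ z ∈ ball (0 : ℂ) 1, 0 < (m z).re := fun z hz ↦
    (Complex.re_one_sub_div_one_add_pos_iff (hadd hz)).2 hz
  set p : ℂ → ℂ := fun z ↦ (t : ℂ) ^ 2 + (1 - (t : ℂ) ^ 2) * m z ^ 2 with hp
  have hpslit : ∀ z ∈ ball (0 : ℂ) 1, p z ∈ slitPlane := by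
    intro z hz
    have hre := hmre z hz
    have e : p z = ((t ^ 2 : ℝ) : ℂ) + ((1 - t ^ 2 : ℝ) : ℂ) * m z ^ 2 := by simp [hp]
    rw [mem_slitPlane_iff, e, add_re, add_im, re_ofReal_mul, im_ofReal_mul, ofReal_re, ofReal_im,
      sq (m z), mul_re, mul_im]
    by_cases him : (m z).im = 0
    · left
      rw [him]
      nlinarith [mul_pos hl (mul_pos hre hre), sq_nonneg t]
    · right
      have : (1 - t ^ 2) * ((m z).re * (m z).im) ≠ 0 :=
        mul_ne_zero hl.ne' (mul_ne_zero hre.ne' him)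
      intro h
      apply this
      linear_combination h / 2
  set μ : ℂ → ℂ := fun z ↦ exp (log (p z) / 2) with hμ
  have hμre : ∀ z ∈ ball (0 : ℂ) 1, 0 < (μ z).re := fun z hz ↦
    Complex.re_exp_log_div_two_pos (hpslit z hz)
  have hμsq : ∀ z ∈ ball (0 : ℂ) 1, μ z ^ 2 = p z := by
    intro z hz
    rw [hμ, ← Complex.exp_nat_mul]
    push_cast
    rw [mul_div_cancel₀ _ two_ne_zero, exp_log (slitPlane_ne_zero (hpslit z hz))]
  have hμadd : ∀ z ∈ ball (0 : ℂ) 1, 1 + μ z ≠ 0 := fun z hz ↦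
    Complex.one_add_ne_zero_of_re_pos (hμre z hz)
  have hmd : ∀ z ∈ ball (0 : ℂ) 1, HasDerivAt m (-2 / (1 + z) ^ 2) z := by
    intro z hz
    convert! ((hasDerivAt_id z).const_sub 1).div ((hasDerivAt_id z).const_add 1) (hadd hz) using 1
    simp only [id]
    ring
  have hpd : ∀ z ∈ ball (0 : ℂ) 1,
      HasDerivAt p ((1 - (t : ℂ) ^ 2) * (2 * m z * (-2 / (1 + z) ^ 2))) z := by
    intro z hz
    refine ((((hmd z hz).pow 2).const_mul (1 - (t : ℂ) ^ 2)).const_add ((t : ℂ) ^ 2)).congr_deriv ?_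
    simp
  have hμd := fun z hz ↦ (((hpd z hz).clog (hpslit z hz)).div_const 2).cexp
  have hm0 : m 0 = 1 := by simp [hm]
  have hp0 : p 0 = 1 := by simp [hp, hm0]
  have hμ0 : μ 0 = 1 := by simp [hμ, hp0]
  have hφd := fun z hz ↦ ((hμd z hz).const_sub 1).div ((hμd z hz).const_add 1) (hμadd z hz)
  have hinv : ∀ z : ℂ, 1 + z ≠ 0 → 1 + (1 - z) / (1 + z) ≠ 0 ∧
      (1 - (1 - z) / (1 + z)) / (1 + (1 - z) / (1 + z)) = z := by
    intro z hz
    have h : 1 + (1 - z) / (1 + z) = 2 / (1 + z) := by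
      field_simp
      ring
    rw [h]
    refine ⟨div_ne_zero two_ne_zero hz, ?_⟩
    field_simp
    ring
  refine ⟨fun z ↦ (1 - μ z) / (1 + μ z), fun z hz ↦
    (hφd z hz).differentiableAt.differentiableWithinAt, fun z hz ↦ ?_, fun z hz w hw h ↦ ?_,
    by simp [hμ0], fun z hz h ↦ ?_, ?_⟩
  · obtain ⟨h1, h2⟩ := hinv (μ z) (hμadd z hz)
    refine (Complex.re_one_sub_div_one_add_pos_iff h1).1 ?_
    rw [h2]
    exact hμre z hz
  · have h1 := Complex.one_sub_div_one_add_injOn (hμadd z hz) (hμadd w hw) h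
    have h2 : p z = p w := by rw [← hμsq z hz, ← hμsq w hw, h1]
    have h3 : m z ^ 2 = m w ^ 2 := mul_left_cancel₀ hlC (add_left_cancel h2)
    rcases sq_eq_sq_iff_eq_or_eq_neg.1 h3 with h4 | h4
    · exact Complex.one_sub_div_one_add_injOn (hadd hz) (hadd hw) h4
    · have h5 := hmre z hz
      have h6 := hmre w hw
      rw [h4, neg_re] at h5
      linarith
  · have h1 : μ z = t := by
      rw [htC, ← h]
      exact (hinv (μ z) (hμadd z hz)).2.symm
    have h2 := hμsq z hz
    rw [h1] at h2
    have h3 : (1 - (t : ℂ) ^ 2) * m z ^ 2 = 0 := by linear_combination -h2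
    have h4 : m z = 0 := by simpa [hlC] using h3
    have h5 := hmre z hz
    rw [h4] at h5
    simp at h5
  · refine (hφd 0 h0mem).deriv.trans ?_
    change (-(μ 0 * _) * (1 + μ 0) - (1 - μ 0) * (μ 0 * _)) / (1 + μ 0) ^ 2 = _
    rw [hμ0, hm0, hp0, htC]
    field_simp
    ring

end UnivalentFunctions

/-- Lower Pick growth bound for bounded univalent functions. -/
theorem stmt9 (f : ℂ → ℂ) (hd : DifferentiableOn ℂ f (ball (0 : ℂ) 1))
    (hmaps : Set.MapsTo f (ball (0 : ℂ) 1) (ball (0 : ℂ) 1))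
    (hinj : Set.InjOn f (ball (0 : ℂ) 1))
    (h0 : f 0 = 0) (w : ℂ) (hw : w ∈ ball (0 : ℂ) 1) (hw0 : w ≠ 0) :
    ‖w‖ * ‖deriv f 0‖ / (1 + ‖w‖) ^ 2 ≤ ‖f w‖ / (1 + ‖f w‖) ^ 2 := by
  have h0mem : (0 : ℂ) ∈ ball (0 : ℂ) 1 := mem_ball_self one_pos
  have ha0 : f w ≠ 0 := fun h ↦ hw0 (hinj hw h0mem (h.trans h0.symm))
  have hr0 : 0 < ‖w‖ := norm_pos_iff.2 hw0
  have hwn : (‖w‖ : ℂ) ≠ 0 := by exact_mod_cast hr0.ne'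
  have han : (‖f w‖ : ℂ) ≠ 0 := by exact_mod_cast (norm_pos_iff.2 ha0).ne'
  obtain ⟨φ, hφd, hφm, hφi, hφ0, hφr, hφ'⟩ :=
    Complex.exists_injOn_mapsTo_ball_forall_ne hr0 (mem_ball_zero_iff.1 hw)
  set u : ℂ := ‖f w‖ / f w with hu
  set v : ℂ := w / ‖w‖ with hv
  have hu1 : ‖u‖ = 1 := by simp [hu, ha0]
  have hv1 : ‖v‖ = 1 := by simp [hv, hw0]
  have hu0 : u ≠ 0 := div_ne_zero han ha0
  have hv0 : v ≠ 0 := div_ne_zero hw0 hwn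
  have hvφ : Set.MapsTo (fun z ↦ v * φ z) (ball 0 1) (ball 0 1) := fun z hz ↦ by
    simpa [hv1] using hφm hz
  set F : ℂ → ℂ := fun z ↦ u * f (v * φ z) with hF
  have hFd : DifferentiableOn ℂ F (ball 0 1) :=
    (hd.comp (hφd.const_mul v) hvφ).const_mul u
  have hFm : Set.MapsTo F (ball 0 1) (ball 0 1) := fun z hz ↦ by
    simpa [hF, hu1] using hmaps (hvφ hz)
  have hFi : Set.InjOn F (ball 0 1) := fun z hz z' hz' h ↦
    hφi hz hz' (mul_left_cancel₀ hv0 (hinj (hvφ hz) (hvφ hz') (mul_left_cancel₀ hu0 h)))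
  have hF0 : F 0 = 0 := by simp [hF, hφ0, h0]
  have hFne : ∀ z ∈ ball (0 : ℂ) 1, F z ≠ ‖f w‖ := by
    intro z hz h
    have h1 : f (v * φ z) = f w := by
      apply mul_left_cancel₀ hu0
      rw [hu, div_mul_cancel₀ _ ha0]
      exact h
    have h2 := hinj (hvφ hz) hw h1
    refine hφr z hz (mul_left_cancel₀ hv0 ?_)
    rw [hv, div_mul_cancel₀ _ hwn]
    exact h2
  have hadd {z : ℂ} (hz : z ∈ ball (0 : ℂ) 1) := Complex.one_add_ne_zero_of_mem_ball hz
  have hk : ∀ z ∈ ball (0 : ℂ) 1, ∀ z' ∈ ball (0 : ℂ) 1,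
      z / (1 + z) ^ 2 = z' / (1 + z') ^ 2 → z = z' := by
    intro z hz z' hz' h
    rw [div_eq_div_iff (pow_ne_zero 2 (hadd hz)) (pow_ne_zero 2 (hadd hz'))] at h
    have h1 : (z - z') * (1 - z * z') = 0 := by linear_combination h
    rcases mul_eq_zero.1 h1 with h2 | h2
    · exact sub_eq_zero.1 h2
    · rw [mem_ball_zero_iff] at hz hz'
      have h3 : ‖z * z'‖ = 1 := by rw [← sub_eq_zero.1 h2, norm_one]
      rw [norm_mul] at h3
      nlinarith [norm_nonneg z, norm_nonneg z']
  have haball : (‖f w‖ : ℂ) ∈ ball (0 : ℂ) 1 := by simpa using hmaps hw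
  have hkoebe := Complex.norm_deriv_le_four_mul_norm_of_forall_ne
    (g := fun z ↦ F z / (1 + F z) ^ 2) (c := ‖f w‖ / (1 + ‖f w‖) ^ 2)
    (hFd.div ((hFd.const_add 1).pow 2) fun z hz ↦ pow_ne_zero 2 (hadd (hFm hz)))
    (by simp [hF0]) (fun z hz z' hz' h ↦ hFi hz hz' (hk _ (hFm hz) _ (hFm hz') h))
    (fun z hz h ↦ hFne z hz (hk _ (hFm hz) _ haball h))
  have hφD : HasDerivAt φ (deriv φ 0) 0 :=
    (hφd.differentiableAt (isOpen_ball.mem_nhds h0mem)).hasDerivAt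
  have hfD : HasDerivAt f (deriv f 0) (v * φ 0) := by
    rw [hφ0, mul_zero]
    exact (hd.differentiableAt (isOpen_ball.mem_nhds h0mem)).hasDerivAt
  have hFD : HasDerivAt F (u * (deriv f 0 * (v * deriv φ 0))) 0 :=
    (hfD.comp 0 (hφD.const_mul v)).const_mul u
  have hGD : deriv (fun z ↦ F z / (1 + F z) ^ 2) 0 = u * (deriv f 0 * (v * deriv φ 0)) := by
    refine (hFD.div ((hFD.const_add 1).pow 2) (by simp [hF0])).deriv.trans ?_
    simp [hF0]
  have hφn : ‖deriv φ 0‖ = 4 * ‖w‖ / (1 + ‖w‖) ^ 2 := by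
    rw [hφ']
    have : (4 * (‖w‖ : ℂ) / (1 + ‖w‖) ^ 2) = ((4 * ‖w‖ / (1 + ‖w‖) ^ 2 : ℝ) : ℂ) := by
      push_cast; rfl
    rw [this, norm_real, Real.norm_of_nonneg (by positivity)]
  have hcn : ‖(‖f w‖ / (1 + ‖f w‖) ^ 2 : ℂ)‖ = ‖f w‖ / (1 + ‖f w‖) ^ 2 := by
    have : (‖f w‖ / (1 + ‖f w‖) ^ 2 : ℂ) = ((‖f w‖ / (1 + ‖f w‖) ^ 2 : ℝ) : ℂ) := by
      push_cast; rfl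
    rw [this, norm_real, Real.norm_of_nonneg (by positivity)]
  rw [hGD, hcn, norm_mul, norm_mul, norm_mul, hu1, hv1, hφn, one_mul, one_mul] at hkoebe
  calc ‖w‖ * ‖deriv f 0‖ / (1 + ‖w‖) ^ 2
      = ‖deriv f 0‖ * (4 * ‖w‖ / (1 + ‖w‖) ^ 2) / 4 := by ring
    _ ≤ _ := by linarith
end

section
/- Let $f:\mathbb{D}\to\mathbb{D}$ be an injective holomorphic map with $f(0)=0$ and let $w\in\mathbb{D}\setminus\{0\}$. Then $\frac{|f(w)|}{(1-|f(w)|)^2} \leq |f'(0)|\,\frac{|w|}{(1-|w|)^2}$ (upper Pick growth bound for bounded univalent functions). -/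
open Complex Metric

/-- The exterior of a closed disk is connected. -/
theorem Complex.isPreconnected_compl_closedBall_zero {M : ℝ} (hM : 0 < M) :
    IsPreconnected {v : ℂ | M < ‖v‖} := by
  have h : {v : ℂ | M < ‖v‖} = Complex.exp '' {z : ℂ | Real.log M < z.re} := by
    ext v
    constructor
    · intro hv
      have hv0 : v ≠ 0 := norm_pos_iff.1 (hM.trans hv)
      exact ⟨Complex.log v, by simpa [Complex.log_re] using Real.log_lt_log hM hv,
        Complex.exp_log hv0⟩
    · rintro ⟨z, hz, rfl⟩
      simpa [Complex.norm_exp] using (Real.log_lt_iff_lt_exp hM).1 hz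
  rw [h]
  exact (convex_halfSpace_re_gt _).isPreconnected.image _ Complex.continuous_exp.continuousOn

/-- Injective holomorphic maps on open sets are open. -/
theorem DifferentiableOn.isOpen_image_of_injOn {G : ℂ → ℂ} {U : Set ℂ}
    (hG : DifferentiableOn ℂ G U) (hU : IsOpen U) (hinj : Set.InjOn G U) : IsOpen (G '' U) := by
  rw [isOpen_iff_mem_nhds]
  rintro _ ⟨z, hz, rfl⟩
  have ha : AnalyticAt ℂ G z := hG.analyticAt (hU.mem_nhds hz)
  rcases ha.eventually_constant_or_nhds_le_map_nhds with h | h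
  · have h2 : ∀ᶠ y in nhdsWithin z {z}ᶜ, G y = G z ∧ y ∈ U :=
      (h.and (hU.mem_nhds hz)).filter_mono nhdsWithin_le_nhds
    obtain ⟨y, ⟨hy, hyU⟩, hyz⟩ := (h2.and self_mem_nhdsWithin).exists
    exact absurd (hinj hyU hz hy) hyz
  · exact h (Filter.image_mem_map (hU.mem_nhds hz))

/-- If `G` is univalent on the punctured disk with a pole at `0`, then the image of the annulus
`ρ < |z| < 1` lies inside any sublevel set (after a homeomorphism `L`) containing the image of the
circle of radius `ρ`. -/
theorem norm_le_of_injOn_punctured_ball {G : ℂ → ℂ}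
    (hG : DifferentiableOn ℂ G (ball 0 1 \ {0})) (hinj : Set.InjOn G (ball 0 1 \ {0}))
    (hpole : Filter.Tendsto G (nhdsWithin 0 {0}ᶜ) (Filter.cocompact ℂ)) (L : ℂ ≃ₜ ℂ)
    {ρ M : ℝ} (hρ : 0 < ρ) (hM : 0 < M) (hbd : ∀ z : ℂ, ‖z‖ = ρ → ‖L (G z)‖ ≤ M)
    {z : ℂ} (hz : ρ < ‖z‖) (hz1 : ‖z‖ < 1) : ‖L (G z)‖ ≤ M := by
  by_contra! hcon
  have hρ1 : ρ < 1 := hz.trans hz1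
  set U : Set ℂ := L.symm '' {v : ℂ | M < ‖v‖} with hUdef
  have hUmem : ∀ u, u ∈ U ↔ M < ‖L u‖ := by
    intro u
    constructor
    · rintro ⟨v, hv, rfl⟩
      simpa using hv
    · intro h
      exact ⟨L u, h, by simp⟩
  have hU : IsPreconnected U :=
    (Complex.isPreconnected_compl_closedBall_zero hM).image _ L.symm.continuous.continuousOn
  set V : Set ℂ := G '' (ball 0 ρ \ {0}) with hVdef
  have hsub : ball (0 : ℂ) ρ \ {0} ⊆ ball 0 1 \ {0} :=
    Set.sdiff_subset_sdiff_left (ball_subset_ball hρ1.le)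
  have hV : IsOpen V := (hG.mono hsub).isOpen_image_of_injOn
    (isOpen_ball.sdiff isClosed_singleton) (hinj.mono hsub)
  have hne : (U ∩ V).Nonempty := by
    have h1 : Filter.Tendsto (fun z => ‖L (G z)‖) (nhdsWithin 0 {0}ᶜ) Filter.atTop :=
      (tendsto_norm_cocompact_atTop.comp L.isClosedEmbedding.tendsto_cocompact).comp hpole
    have h2 := h1.eventually (Filter.eventually_gt_atTop M)
    have h3 : ∀ᶠ z : ℂ in nhdsWithin 0 {0}ᶜ, z ∈ ball (0 : ℂ) ρ :=
      (ball_mem_nhds _ hρ : ball (0 : ℂ) ρ ∈ nhds 0) |> fun h => nhdsWithin_le_nhds h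
    obtain ⟨y, ⟨hy, hyb⟩, hy0⟩ := ((h2.and h3).and self_mem_nhdsWithin).exists
    exact ⟨G y, (hUmem _).2 hy, y, ⟨hyb, hy0⟩, rfl⟩
  have hcl : closure V ∩ U ⊆ V := by
    rintro u ⟨huV, huU⟩
    have h1 : ∀ᶠ z in nhdsWithin 0 {0}ᶜ, G z ∈ (closedBall u 1)ᶜ :=
      hpole.eventually ((isCompact_closedBall u 1).compl_mem_cocompact)
    rw [eventually_nhdsWithin_iff, Metric.eventually_nhds_iff_ball] at h1
    obtain ⟨δ, hδ, hδ'⟩ := h1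
    set K : Set ℂ := closedBall 0 ρ \ ball 0 δ with hK
    have hKc : IsCompact K := (isCompact_closedBall 0 ρ).diff isOpen_ball
    have hKs : K ⊆ ball 0 1 \ {0} := by
      rintro y ⟨hy1, hy2⟩
      refine ⟨closedBall_subset_ball hρ1 hy1, ?_⟩
      rintro rfl
      exact hy2 (mem_ball_self hδ)
    have hGK : IsCompact (G '' K) := hKc.image_of_continuousOn (hG.continuousOn.mono hKs)
    have hVs : V ⊆ (ball u 1)ᶜ ∪ G '' K := by
      rintro _ ⟨y, ⟨hy, hy0⟩, rfl⟩
      by_cases hyδ : y ∈ ball (0 : ℂ) δ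
      · left
        intro h
        exact hδ' y hyδ hy0 (ball_subset_closedBall h)
      · right
        exact ⟨y, ⟨ball_subset_closedBall hy, hyδ⟩, rfl⟩
    have := closure_minimal hVs (isOpen_ball.isClosed_compl.union hGK.isClosed) huV
    rcases this with h | ⟨y, hy, rfl⟩
    · exact absurd (mem_ball_self one_pos) h
    · have hyρ : ‖y‖ ≠ ρ := fun h => absurd (hbd y h) (not_le.2 ((hUmem _).1 huU))
      have hyle : ‖y‖ ≤ ρ := by simpa using hy.1
      exact ⟨y, ⟨by simpa using lt_of_le_of_ne hyle hyρ, (hKs hy).2⟩, rfl⟩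
  obtain ⟨y, ⟨hy, hy0⟩, hyz⟩ :=
    hU.subset_of_closure_inter_subset hV hne hcl ((hUmem (G z)).2 hcon)
  have hz0 : z ≠ 0 := norm_pos_iff.1 (hρ.trans hz)
  have := hinj (hsub ⟨hy, hy0⟩) ⟨by simpa using hz1, hz0⟩ hyz
  subst this
  have : ‖y‖ < ρ := by simpa using hy
  linarith

/-- Parseval-type lower bound for the mean square of `-1 / z ^ 2 + H z` on a circle. -/
theorem circleAverage_normSq_laurent_lower {H : ℂ → ℂ} (hH : DifferentiableOn ℂ H (ball 0 1))
    {r : ℝ} (hr : 0 < r) (hr1 : r < 1) :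
    (r ^ 4)⁻¹ + ‖H 0‖ ^ 2 ≤ Real.circleAverage (fun z => ‖-1 / z ^ 2 + H z‖ ^ 2) 0 r := by
  set b := H 0 with hb
  set W : ℂ → ℂ := fun z => (r ^ 4 : ℂ)⁻¹ *
    (-2 * b * z ^ 2 + 2 * (-z ^ 2 * (H z - b) + (starRingEnd ℂ) b * r ^ 4 * (H z - b))) with hW
  have hsub : closedBall (0 : ℂ) r ⊆ ball 0 1 := closedBall_subset_ball hr1
  have hWd : DifferentiableOn ℂ W (ball 0 1) := by
    simp only [hW]; fun_prop
  have hWc : ContinuousOn W (sphere 0 r) :=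
    hWd.continuousOn.mono (sphere_subset_closedBall.trans hsub)
  have hHc : ContinuousOn H (sphere 0 r) :=
    hH.continuousOn.mono (sphere_subset_closedBall.trans hsub)
  have hWI : CircleIntegrable W 0 r := hWc.circleIntegrable hr.le
  have hWav : Real.circleAverage W 0 r = 0 := by
    rw [DiffContOnCl.circleAverage]
    · simp [hW, hb]
    · rw [abs_of_pos hr]
      exact (hWd.mono (closure_ball_subset_closedBall.trans hsub)).diffContOnCl
  have hreI : CircleIntegrable (fun z => (W z).re) 0 r :=
    (Complex.continuous_re.comp_continuousOn hWc).circleIntegrable hr.le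
  have hre : Real.circleAverage (fun z => (W z).re) 0 r = 0 := by
    have h := Complex.reCLM.intervalIntegral_comp_comm hWI
    have h2 : (∫ θ in (0:ℝ)..2 * Real.pi, W (circleMap 0 r θ)) = 0 := by
      rw [Real.circleAverage_def] at hWav
      simpa [Real.pi_ne_zero] using hWav
    rw [Real.circleAverage_def]
    rw [h2] at h
    simp only [Complex.reCLM_apply, Complex.zero_re] at h
    rw [h, smul_zero]
  have hconst : Real.circleAverage (fun _ : ℂ => (r ^ 4)⁻¹ + ‖b‖ ^ 2) 0 r = (r ^ 4)⁻¹ + ‖b‖ ^ 2 :=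
    Real.circleAverage_const _ _ _
  have hsum : (r ^ 4)⁻¹ + ‖b‖ ^ 2 =
      Real.circleAverage (fun z => ((r ^ 4)⁻¹ + ‖b‖ ^ 2) + (W z).re) 0 r := by
    rw [Real.circleAverage_fun_add (circleIntegrable_const _ _ _) hreI, hre, hconst, add_zero]
  rw [hsum]
  have hz0 : ∀ z ∈ sphere (0 : ℂ) r, z ^ 2 ≠ 0 := by
    intro z hz
    have : z ≠ 0 := ne_of_mem_sphere hz hr.ne'
    positivity
  refine Real.circleAverage_mono ?_ ?_ ?_
  · exact (circleIntegrable_const _ _ _).add hreI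
  · refine ContinuousOn.circleIntegrable hr.le ?_
    exact ((ContinuousOn.div continuousOn_const (by fun_prop) hz0).add hHc).norm.pow 2
  · intro z hz
    rw [abs_of_pos hr] at hz
    have hz2 := hz0 z hz
    have hzn : ‖z‖ = r := by simpa using hz
    have hzz : z ^ 2 * (starRingEnd ℂ) (z ^ 2) = (r : ℂ) ^ 4 := by
      rw [Complex.mul_conj, Complex.normSq_eq_norm_sq, norm_pow, hzn]; push_cast; ring
    have hrc : (r : ℂ) ^ 4 ≠ 0 := by exact_mod_cast (pow_pos hr 4).ne'
    set u := z ^ 2 with hu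
    set S := H z - b with hS
    have hinv : -1 / u = -(r ^ 4 : ℂ)⁻¹ * (starRingEnd ℂ) u := by
      rw [div_eq_iff hz2, neg_mul, neg_mul, mul_assoc, mul_comm ((starRingEnd ℂ) u), hzz,
        inv_mul_cancel₀ hrc]
    have e1 : -1 / u + H z = (-1 / u + b) + S := by rw [hS]; ring
    have e2 : ‖(-1 / u + b) + S‖ ^ 2 =
        ‖-1 / u + b‖ ^ 2 + ‖S‖ ^ 2 + 2 * (S * (starRingEnd ℂ) (-1 / u + b)).re := by
      rw [← Complex.normSq_eq_norm_sq, add_comm, Complex.normSq_add, Complex.normSq_eq_norm_sq,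
        Complex.normSq_eq_norm_sq]; ring
    have e3 : ‖-1 / u + b‖ ^ 2 =
        (r ^ 4)⁻¹ + ‖b‖ ^ 2 + 2 * (b * (starRingEnd ℂ) (-1 / u)).re := by
      have : ‖-1 / u‖ ^ 2 = (r ^ 4)⁻¹ := by
        rw [norm_div, norm_neg, norm_one, hu, norm_pow, hzn]; field_simp
      rw [← this, ← Complex.normSq_eq_norm_sq, add_comm, Complex.normSq_add,
        Complex.normSq_eq_norm_sq, Complex.normSq_eq_norm_sq]; ring
    have e4 : W z = 2 * (b * (starRingEnd ℂ) (-1 / u)) + 2 * (S * (starRingEnd ℂ) (-1 / u + b)) := by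
      have hWz : W z = (r ^ 4 : ℂ)⁻¹ *
        (-2 * b * u + 2 * (-u * S + (starRingEnd ℂ) b * r ^ 4 * S)) := rfl
      rw [hWz, map_add, hinv]
      simp only [map_mul, map_neg, map_inv₀, map_pow, Complex.conj_ofReal, Complex.conj_conj]
      have hrr : (r ^ 4 : ℂ)⁻¹ * r ^ 4 = 1 := inv_mul_cancel₀ hrc
      linear_combination 2 * S * (starRingEnd ℂ) b * hrr
    show _ ≤ ‖-1 / u + H z‖ ^ 2
    rw [e1, e2, e3, e4]
    simp only [Complex.add_re, Complex.mul_re, Complex.re_ofNat, Complex.im_ofNat]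
    nlinarith [sq_nonneg ‖S‖]

/-- Lower bound for the area integral of `|-1 / z ^ 2 + H z| ^ 2` over an annulus. -/
theorem lintegral_annulus_normSq_laurent_lower {H D : ℂ → ℂ}
    (hH : DifferentiableOn ℂ H (ball 0 1)) (hDm : Measurable D) {ρ : ℝ} (hρ : 0 < ρ) (hρ1 : ρ < 1)
    (hD : ∀ z : ℂ, ρ < ‖z‖ → ‖z‖ < 1 → D z = -1 / z ^ 2 + H z) :
    ENNReal.ofReal (Real.pi * ((ρ ^ 2)⁻¹ - 1 + ‖H 0‖ ^ 2 * (1 - ρ ^ 2))) ≤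
      ∫⁻ z in {z : ℂ | ρ < ‖z‖ ∧ ‖z‖ < 1}, ENNReal.ofReal (‖D z‖ ^ 2) := by
  set A : Set ℂ := {z : ℂ | ρ < ‖z‖ ∧ ‖z‖ < 1} with hA
  have hAm : MeasurableSet A :=
    (measurableSet_lt measurable_const measurable_norm).inter
      (measurableSet_lt measurable_norm measurable_const)
  set F : ℂ → ENNReal := A.indicator (fun z => ENNReal.ofReal (‖D z‖ ^ 2)) with hF
  have hFm : Measurable F := (hDm.norm.pow_const 2).ennreal_ofReal.indicator hAm
  have hsymm : Measurable fun p : ℝ × ℝ => Complex.polarCoord.symm p := by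
    simp only [Complex.polarCoord_symm_apply]
    fun_prop
  rw [← MeasureTheory.lintegral_indicator hAm, ← Complex.lintegral_comp_polarCoord_symm,
    polarCoord_target, MeasureTheory.Measure.volume_eq_prod, MeasureTheory.setLIntegral_prod]
  swap
  · exact (((measurable_fst.ennreal_ofReal).smul (hFm.comp hsymm))).aemeasurable
  set g : ℝ → ℝ := fun r => 2 * Real.pi * ((r ^ 3)⁻¹ + ‖H 0‖ ^ 2 * r) with hg
  have hinner : ∀ r ∈ Set.Ioo ρ 1, ENNReal.ofReal (g r) ≤
      ∫⁻ θ in Set.Ioo (-Real.pi) Real.pi,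
        ENNReal.ofReal r • F (Complex.polarCoord.symm (r, θ)) := by
    rintro r ⟨hr, hr1⟩
    have hr0 : 0 < r := hρ.trans hr
    have hcm : ∀ θ : ℝ, Complex.polarCoord.symm (r, θ) = circleMap 0 r θ := by
      intro θ
      rw [Complex.polarCoord_symm_apply, circleMap, zero_add, Complex.exp_mul_I]
      push_cast; rfl
    have hFv : ∀ θ : ℝ, F (circleMap 0 r θ) =
        ENNReal.ofReal (‖-1 / (circleMap 0 r θ) ^ 2 + H (circleMap 0 r θ)‖ ^ 2) := by
      intro θ
      have hn : ‖circleMap 0 r θ‖ = r := by simp [abs_of_pos hr0]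
      rw [hF, Set.indicator_of_mem (by simp only [hA, Set.mem_ofPred_eq, hn]; exact ⟨hr, hr1⟩),
        hD _ (by rwa [hn]) (by rwa [hn])]
    simp only [hcm, hFv, smul_eq_mul]
    rw [MeasureTheory.lintegral_const_mul' _ _ ENNReal.ofReal_ne_top]
    set φ : ℝ → ℝ := fun θ => ‖-1 / (circleMap 0 r θ) ^ 2 + H (circleMap 0 r θ)‖ ^ 2 with hφ
    have hφc : Continuous φ := by
      have h1 : ∀ θ, circleMap 0 r θ ≠ 0 := fun θ => circleMap_ne_center hr0.ne'
      have h2 : Continuous fun θ => H (circleMap 0 r θ) :=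
        hH.continuousOn.comp_continuous (continuous_circleMap 0 r)
          (fun θ => by simp [abs_of_pos hr0, hr1])
      have h3 : Continuous fun θ => -1 / (circleMap 0 r θ) ^ 2 :=
        continuous_const.div ((continuous_circleMap 0 r).pow 2) (fun θ => pow_ne_zero 2 (h1 θ))
      exact (h3.add h2).norm.pow 2
    have hφi : MeasureTheory.IntegrableOn φ (Set.Ioo (-Real.pi) Real.pi) :=
      (hφc.integrableOn_Icc).mono_set Set.Ioo_subset_Icc_self
    rw [← MeasureTheory.ofReal_integral_eq_lintegral_ofReal hφi
      (Filter.Eventually.of_forall fun θ => by positivity), ← ENNReal.ofReal_mul hr0.le]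
    apply ENNReal.ofReal_le_ofReal
    have hav := circleAverage_normSq_laurent_lower hH hr0 hr1
    have hshift : ∫ θ in (0 : ℝ)..2 * Real.pi, φ (θ + -Real.pi) =
        ∫ θ in Set.Ioo (-Real.pi) Real.pi, φ θ := by
      rw [intervalIntegral.integral_comp_add_right (fun θ ↦ φ θ), ← MeasureTheory.integral_Ioc_eq_integral_Ioo,
        intervalIntegral.integral_of_le (by linarith [Real.pi_pos])]
      congr 3 <;> ring
    rw [Real.circleAverage_eq_integral_add (-Real.pi)] at hav
    change _ ≤ (2 * Real.pi)⁻¹ • ∫ θ in (0 : ℝ)..2 * Real.pi, φ (θ + -Real.pi) at hav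
    rw [hshift, smul_eq_mul, ← div_eq_inv_mul, le_div_iff₀ (by positivity)] at hav
    calc g r = r * (((r ^ 4)⁻¹ + ‖H 0‖ ^ 2) * (2 * Real.pi)) := by
          simp only [hg]; field_simp
      _ ≤ _ := mul_le_mul_of_nonneg_left hav hr0.le
  have hgc : ContinuousOn g (Set.Icc ρ 1) := by
    have : ∀ r ∈ Set.Icc ρ 1, r ^ 3 ≠ 0 := fun r hr => (pow_pos (hρ.trans_le hr.1) 3).ne'
    simp only [hg]
    fun_prop (disch := assumption)
  have hgi : MeasureTheory.IntegrableOn g (Set.Ioo ρ 1) :=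
    (hgc.integrableOn_Icc).mono_set Set.Ioo_subset_Icc_self
  have hgint : ∫ r in Set.Ioo ρ 1, g r =
      Real.pi * ((ρ ^ 2)⁻¹ - 1 + ‖H 0‖ ^ 2 * (1 - ρ ^ 2)) := by
    rw [← MeasureTheory.integral_Ioc_eq_integral_Ioo, ← intervalIntegral.integral_of_le hρ1.le]
    rw [intervalIntegral.integral_eq_sub_of_hasDerivAt
      (f := fun r => Real.pi * (-(r ^ 2)⁻¹ + ‖H 0‖ ^ 2 * r ^ 2))]
    · ring
    · intro r hr
      rw [Set.uIcc_of_le hρ1.le] at hr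
      have hr0 : r ≠ 0 := (hρ.trans_le hr.1).ne'
      convert! (((((hasDerivAt_id r).pow 2).inv (pow_ne_zero 2 hr0)).neg).add
        (((hasDerivAt_id r).pow 2).const_mul (‖H 0‖ ^ 2))).const_mul Real.pi using 1
      simp only [hg, id]
      field_simp
      simp
      ring
    · apply ContinuousOn.intervalIntegrable
      rwa [Set.uIcc_of_le hρ1.le]
  rw [← hgint, MeasureTheory.ofReal_integral_eq_lintegral_ofReal hgi]
  · calc ∫⁻ r in Set.Ioo ρ 1, ENNReal.ofReal (g r)
        ≤ ∫⁻ r in Set.Ioo ρ 1, ∫⁻ θ in Set.Ioo (-Real.pi) Real.pi,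
          ENNReal.ofReal r • F (Complex.polarCoord.symm (r, θ)) :=
        MeasureTheory.setLIntegral_mono' measurableSet_Ioo hinner
      _ ≤ _ := MeasureTheory.lintegral_mono_set (fun r hr => hρ.trans hr.1)
  · filter_upwards [MeasureTheory.ae_restrict_mem measurableSet_Ioo] with r hr
    have : 0 < r := hρ.trans hr.1
    simp only [hg, Pi.zero_apply]
    positivity

/-- The real-linear map `u ↦ u - c * conj u`. -/
noncomputable def idSubMulConj (c : ℂ) : ℂ →ₗ[ℝ] ℂ :=
  LinearMap.id - (LinearMap.mulLeft ℝ c).comp Complex.conjAe.toLinearMap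

theorem idSubMulConj_apply (c u : ℂ) : idSubMulConj c u = u - c * (starRingEnd ℂ) u := rfl

theorem det_idSubMulConj (c : ℂ) : LinearMap.det (idSubMulConj c) = 1 - ‖c‖ ^ 2 := by
  rw [← LinearMap.det_toMatrix Complex.basisOneI, Matrix.det_fin_two]
  simp only [LinearMap.toMatrix_apply, idSubMulConj_apply]
  simp [← Complex.normSq_eq_norm_sq, Complex.normSq_apply]
  ring

theorem volume_image_eq_lintegral_norm_deriv {G : ℂ → ℂ} {s : Set ℂ} (hs : MeasurableSet s)
    (hG : ∀ z ∈ s, DifferentiableAt ℂ G z) (hinj : Set.InjOn G s) :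
    ∫⁻ z in s, ENNReal.ofReal (‖deriv G z‖ ^ 2) = MeasureTheory.volume (G '' s) := by
  rw [← MeasureTheory.lintegral_abs_det_fderiv_eq_addHaar_image MeasureTheory.volume hs
    (fun z hz => ((hG z hz).hasDerivAt.hasFDerivAt.restrictScalars ℝ).hasFDerivWithinAt) hinj]
  refine MeasureTheory.setLIntegral_congr_fun hs fun z _ => ?_
  simp [ContinuousLinearMap.det, LinearMap.det_restrictScalars]
  simp [Algebra.norm_complex_apply, Complex.normSq_eq_norm_sq]

/-- A quantitative form of the area theorem, before letting `ρ` tend to `0`. -/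
theorem area_inequality {P : ℂ → ℂ} (hP : DifferentiableOn ℂ P (ball 0 1))
    (hinj : Set.InjOn (fun z => z⁻¹ + P z) (ball 0 1 \ {0})) {ρ M : ℝ} (hρ : 0 < ρ) (hρ1 : ρ < 1)
    (hM : 0 < M) (hc : ρ ^ 2 * ‖deriv P 0‖ < 1)
    (hbd : ∀ z : ℂ, ‖z‖ = ρ → ‖idSubMulConj (ρ ^ 2 * deriv P 0) (z⁻¹ + P z)‖ ≤ M) :
    ((ρ ^ 2)⁻¹ - 1 + ‖deriv P 0‖ ^ 2 * (1 - ρ ^ 2)) * (1 - (ρ ^ 2 * ‖deriv P 0‖) ^ 2) ≤ M ^ 2 := by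
  set G : ℂ → ℂ := fun z => z⁻¹ + P z with hGdef
  set c : ℂ := ρ ^ 2 * deriv P 0 with hcdef
  have hcn : ‖c‖ = ρ ^ 2 * ‖deriv P 0‖ := by simp [hcdef]
  have hdet : 0 < LinearMap.det (idSubMulConj c) := by
    rw [det_idSubMulConj, hcn]
    nlinarith [norm_nonneg (deriv P 0), sq_nonneg ρ, mul_nonneg (sq_nonneg ρ) (norm_nonneg (deriv P 0))]
  have hG : ∀ z ∈ ball (0 : ℂ) 1 \ {0}, HasDerivAt G (-1 / z ^ 2 + deriv P z) z := by
    rintro z ⟨hz, hz0⟩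
    have h1 := hasDerivAt_inv (𝕜 := ℂ) hz0
    have h2 := (hP.differentiableAt (isOpen_ball.mem_nhds hz)).hasDerivAt
    convert! h1.add h2 using 1
    ring
  have hGd : DifferentiableOn ℂ G (ball 0 1 \ {0}) :=
    fun z hz => (hG z hz).differentiableAt.differentiableWithinAt
  have hpole : Filter.Tendsto G (nhdsWithin 0 {0}ᶜ) (Filter.cocompact ℂ) := by
    rw [← Metric.cobounded_eq_cocompact]
    rw [← tendsto_norm_atTop_iff_cobounded]
    have h1 : Filter.Tendsto (fun z : ℂ => ‖z⁻¹‖) (nhdsWithin 0 {0}ᶜ) Filter.atTop :=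
      tendsto_norm_cobounded_atTop.comp Filter.tendsto_inv₀_nhdsNE_zero
    have h2 : Filter.Tendsto (fun z : ℂ => -‖P z‖) (nhdsWithin 0 {0}ᶜ) (nhds (-‖P 0‖)) :=
      ((hP.differentiableAt (ball_mem_nhds _ one_pos)).continuousAt.norm.neg).tendsto.mono_left
        nhdsWithin_le_nhds
    refine Filter.tendsto_atTop_mono (fun z => ?_) (h1.atTop_add h2)
    have := norm_sub_le_norm_add z⁻¹ (P z)
    simp only [hGdef]
    linarith
  let L : ℂ ≃ₜ ℂ := (LinearEquiv.ofIsUnitDet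
    (f := idSubMulConj c) (v := Complex.basisOneI) (v' := Complex.basisOneI)
    (by rw [LinearMap.det_toMatrix]; exact hdet.ne'.isUnit)).toContinuousLinearEquiv.toHomeomorph
  have hL : ∀ u, L u = idSubMulConj c u := fun u => rfl
  set A : Set ℂ := {z : ℂ | ρ < ‖z‖ ∧ ‖z‖ < 1} with hA
  have hAs : A ⊆ ball 0 1 \ {0} := by
    rintro z ⟨h1, h2⟩
    exact ⟨by simpa using h2, norm_pos_iff.1 (hρ.trans h1)⟩
  have hAm : MeasurableSet A :=
    (measurableSet_lt measurable_const measurable_norm).inter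
      (measurableSet_lt measurable_norm measurable_const)
  have himage : G '' A ⊆ idSubMulConj c ⁻¹' closedBall 0 M := by
    rintro _ ⟨z, ⟨h1, h2⟩, rfl⟩
    have := norm_le_of_injOn_punctured_ball hGd hinj hpole L hρ hM hbd h1 h2
    simpa [hL] using this
  have hvol : MeasureTheory.volume (G '' A) ≤
      ENNReal.ofReal ((LinearMap.det (idSubMulConj c))⁻¹ * (Real.pi * M ^ 2)) := by
    refine (MeasureTheory.measure_mono himage).trans ?_
    rw [MeasureTheory.Measure.addHaar_preimage_linearMap _ hdet.ne', Complex.volume_closedBall,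
      abs_of_pos (inv_pos.2 hdet), ENNReal.ofReal_mul (inv_pos.2 hdet).le, mul_comm Real.pi,
      ENNReal.ofReal_mul (sq_nonneg M), ENNReal.ofReal_pow hM.le]
    rw [← NNReal.coe_real_pi, ENNReal.ofReal_coe_nnreal]
  have hlow := lintegral_annulus_normSq_laurent_lower (H := deriv P) (D := deriv G)
    (hP.deriv isOpen_ball) (measurable_deriv G) hρ hρ1
    (fun z h1 h2 => (hG z (hAs ⟨h1, h2⟩)).deriv)
  rw [volume_image_eq_lintegral_norm_deriv hAm
    (fun z hz => (hG z (hAs hz)).differentiableAt) (hinj.mono hAs)] at hlow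
  have hfin := (ENNReal.ofReal_le_ofReal_iff (by positivity)).1 (hlow.trans hvol)
  rw [det_idSubMulConj, hcn] at hfin hdet
  rw [mul_left_comm] at hfin
  have h3 := le_of_mul_le_mul_left hfin Real.pi_pos
  rwa [← div_eq_inv_mul, le_div_iff₀ hdet] at h3

/-- The leading case of the area theorem. -/
theorem norm_deriv_le_one_of_injOn_inv_add {P : ℂ → ℂ} (hP : DifferentiableOn ℂ P (ball 0 1))
    (hP0 : P 0 = 0) (hinj : Set.InjOn (fun z => z⁻¹ + P z) (ball 0 1 \ {0})) :
    ‖deriv P 0‖ ≤ 1 := by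
  set b := deriv P 0 with hb
  have h01 : ball (0 : ℂ) 1 ∈ nhds 0 := ball_mem_nhds _ one_pos
  have hds : DifferentiableOn ℂ (dslope P 0) (ball 0 1) :=
    (Complex.differentiableOn_dslope h01).2 hP
  have hO := (hds.differentiableAt h01).isBigO_sub
  obtain ⟨C, hC⟩ := hO.bound
  simp only [sub_zero, dslope_same, ← hb] at hC
  have hC' : ∀ᶠ z : ℂ in nhds 0, ‖P z - b * z‖ ≤ |C| * ‖z‖ ^ 2 := by
    filter_upwards [hC] with z hz
    have : P z = z * dslope P 0 z := by
      have := sub_smul_dslope P 0 z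
      simpa [hP0] using this.symm
    rw [this, mul_comm b, ← mul_sub, norm_mul, sq, mul_left_comm]
    gcongr
    exact hz.trans (by gcongr; exact le_abs_self C)
  obtain ⟨δ, hδ, hδ'⟩ := Metric.eventually_nhds_iff_ball.1 hC'
  set K := |C| + ‖b‖ ^ 2 + ‖b‖ * |C| with hK
  have hK0 : 0 ≤ K := by positivity
  have hmain : ∀ᶠ ρ : ℝ in nhdsWithin 0 (Set.Ioi 0),
      -1 + ‖b‖ ^ 2 * (1 - ρ ^ 2) - ρ ^ 2 * ‖b‖ ^ 2
        - ρ ^ 4 * ‖b‖ ^ 2 * (-1 + ‖b‖ ^ 2 * (1 - ρ ^ 2)) ≤ 2 * K * ρ + K ^ 2 * ρ ^ 4 := by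
    have e1 : ∀ᶠ ρ : ℝ in nhdsWithin 0 (Set.Ioi 0), ρ ^ 2 * ‖b‖ < 1 := by
      have : Filter.Tendsto (fun ρ : ℝ => ρ ^ 2 * ‖b‖) (nhdsWithin 0 (Set.Ioi 0))
          (nhds (0 ^ 2 * ‖b‖)) :=
        (Continuous.tendsto (by fun_prop) _).mono_left nhdsWithin_le_nhds
      exact this.eventually (gt_mem_nhds (by simp))
    filter_upwards [e1, Ioo_mem_nhdsGT one_pos, Ioo_mem_nhdsGT hδ] with ρ hρb hρ1 hρδ
    have hρ : 0 < ρ := hρ1.1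
    have hbd : ∀ z : ℂ, ‖z‖ = ρ →
        ‖idSubMulConj (ρ ^ 2 * deriv P 0) (z⁻¹ + P z)‖ ≤ ρ⁻¹ + K * ρ ^ 2 := by
      intro z hz
      have hz0 : z ≠ 0 := norm_pos_iff.1 (hz ▸ hρ)
      have he := hδ' z (by simpa [hz] using hρδ.2)
      rw [hz] at he
      set e := P z - b * z with hedef
      have hPz : P z = b * z + e := by rw [hedef]; ring
      have hzz : (ρ : ℂ) ^ 2 = z * (starRingEnd ℂ) z := by
        rw [Complex.mul_conj, Complex.normSq_eq_norm_sq, hz]; push_cast; ring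
      have hcz : (starRingEnd ℂ) z ≠ 0 := by simpa using hz0
      have heq : idSubMulConj (ρ ^ 2 * deriv P 0) (z⁻¹ + P z) =
          z⁻¹ + e - ρ ^ 2 * b * (starRingEnd ℂ) b * (starRingEnd ℂ) z
            - ρ ^ 2 * b * (starRingEnd ℂ) e := by
        rw [idSubMulConj_apply, hPz, ← hb, hzz]
        simp only [map_add, map_mul, map_inv₀]
        field_simp
        ring
      rw [heq]
      calc _ ≤ ‖z⁻¹‖ + ‖e‖ + ‖ρ ^ 2 * b * (starRingEnd ℂ) b * (starRingEnd ℂ) z‖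
            + ‖ρ ^ 2 * b * (starRingEnd ℂ) e‖ := by
            refine (norm_sub_le _ _).trans ?_
            gcongr
            refine (norm_sub_le _ _).trans ?_
            gcongr
            exact norm_add_le _ _
        _ = ρ⁻¹ + ‖e‖ + ρ ^ 3 * ‖b‖ ^ 2 + ρ ^ 2 * ‖b‖ * ‖e‖ := by
            simp [hz, abs_of_pos hρ]; ring
        _ ≤ ρ⁻¹ + |C| * ρ ^ 2 + ρ ^ 2 * ‖b‖ ^ 2 + 1 * ‖b‖ * (|C| * ρ ^ 2) := by
            have h32 : ρ ^ 3 ≤ ρ ^ 2 := pow_le_pow_of_le_one hρ.le hρ1.2.le (by norm_num)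
            have h21 : ρ ^ 2 ≤ 1 := pow_le_one₀ hρ.le hρ1.2.le
            gcongr
        _ = _ := by rw [hK]; ring
    have h := area_inequality hP hinj hρ hρ1.2 (by positivity) hρb hbd
    have hid : ((ρ ^ 2)⁻¹ - 1 + ‖b‖ ^ 2 * (1 - ρ ^ 2)) * (1 - (ρ ^ 2 * ‖b‖) ^ 2) =
        (ρ ^ 2)⁻¹ + (-1 + ‖b‖ ^ 2 * (1 - ρ ^ 2) - ρ ^ 2 * ‖b‖ ^ 2
        - ρ ^ 4 * ‖b‖ ^ 2 * (-1 + ‖b‖ ^ 2 * (1 - ρ ^ 2))) := by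
      field_simp; ring
    have hid2 : (ρ⁻¹ + K * ρ ^ 2) ^ 2 = (ρ ^ 2)⁻¹ + (2 * K * ρ + K ^ 2 * ρ ^ 4) := by
      field_simp; ring
    rw [← hb, hid, hid2] at h
    linarith
  have hl : Filter.Tendsto (fun ρ : ℝ => -1 + ‖b‖ ^ 2 * (1 - ρ ^ 2) - ρ ^ 2 * ‖b‖ ^ 2
        - ρ ^ 4 * ‖b‖ ^ 2 * (-1 + ‖b‖ ^ 2 * (1 - ρ ^ 2)))
        (nhdsWithin 0 (Set.Ioi 0)) (nhds (-1 + ‖b‖ ^ 2)) := by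
    refine Filter.Tendsto.mono_left ?_ nhdsWithin_le_nhds
    exact Continuous.tendsto' (by fun_prop) _ _ (by ring)
  have hr : Filter.Tendsto (fun ρ : ℝ => 2 * K * ρ + K ^ 2 * ρ ^ 4)
        (nhdsWithin 0 (Set.Ioi 0)) (nhds 0) := by
    refine Filter.Tendsto.mono_left ?_ nhdsWithin_le_nhds
    exact Continuous.tendsto' (by fun_prop) _ _ (by ring)
  have := le_of_tendsto_of_tendsto hl hr hmain
  exact (sq_le_one_iff₀ (norm_nonneg b)).1 (by linarith)

/-- A branch of `sqrt (p 0 / p)` on the unit disk. -/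
theorem exists_sq_mul_eq_of_ne_zero {p : ℂ → ℂ} (hp : DifferentiableOn ℂ p (ball 0 1))
    (hp0 : ∀ z ∈ ball (0 : ℂ) 1, p z ≠ 0) :
    ∃ k : ℂ → ℂ, DifferentiableOn ℂ k (ball 0 1) ∧ k 0 = 1 ∧
      ∀ z ∈ ball (0 : ℂ) 1, k z ^ 2 * p z = p 0 := by
  have h0 : (0 : ℂ) ∈ ball (0 : ℂ) 1 := mem_ball_self one_pos
  obtain ⟨l, hl⟩ := ((hp.deriv isOpen_ball).div hp hp0).isExactOn_ball
  have hd : ∀ z ∈ ball (0 : ℂ) 1,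
      HasDerivAt (fun z => Complex.exp (-(l z - l 0) / 2))
        (Complex.exp (-(l z - l 0) / 2) * (-(deriv p z / p z) / 2)) z := fun z hz =>
    ((((hl z hz).sub_const (l 0)).neg).div_const 2).cexp
  refine ⟨fun z => Complex.exp (-(l z - l 0) / 2),
    fun z hz => (hd z hz).differentiableAt.differentiableWithinAt, by simp, ?_⟩
  intro z hz
  have hD : ∀ z ∈ ball (0 : ℂ) 1,
      HasDerivAt (fun z => Complex.exp (-(l z - l 0) / 2) ^ 2 * p z) 0 z := by
    intro z hz
    convert! ((hd z hz).pow 2).mul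
      (hp.differentiableAt (isOpen_ball.mem_nhds hz)).hasDerivAt using 1
    have := hp0 z hz
    field_simp
    simp
    exact Or.inr (by ring)
  have := isOpen_ball.is_const_of_deriv_eq_zero (convex_ball (0 : ℂ) 1).isPreconnected
    (fun z hz => (hD z hz).differentiableAt.differentiableWithinAt)
    (fun z hz => (hD z hz).deriv) hz h0
  simpa using this

/-- Bieberbach's inequality for the second coefficient of a univalent function. -/
theorem norm_deriv_deriv_zero_le_of_injOn {g : ℂ → ℂ} (hg : DifferentiableOn ℂ g (ball 0 1))
    (hinj : Set.InjOn g (ball 0 1)) (hg0 : deriv g 0 ≠ 0) :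
    ‖deriv (deriv g) 0‖ ≤ 4 * ‖deriv g 0‖ := by
  have h0 : (0 : ℂ) ∈ ball (0 : ℂ) 1 := mem_ball_self one_pos
  have h01 : ball (0 : ℂ) 1 ∈ nhds 0 := ball_mem_nhds _ one_pos
  set p := dslope g 0 with hpdef
  have hp : DifferentiableOn ℂ p (ball 0 1) := (Complex.differentiableOn_dslope h01).2 hg
  have hp00 : p 0 = deriv g 0 := dslope_same g 0
  have hgp : ∀ z, g z = g 0 + z * p z := by
    intro z
    have := sub_smul_dslope g 0 z
    simp only [sub_zero, smul_eq_mul] at this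
    rw [hpdef, this]; ring
  have hpne : ∀ z ∈ ball (0 : ℂ) 1, p z ≠ 0 := by
    intro z hz hpz
    by_cases hz0 : z = 0
    · subst hz0; exact hg0 (hp00 ▸ hpz)
    · exact hz0 (hinj hz h0 (by rw [hgp z, hpz]; ring))
  have hg2 : deriv (deriv g) 0 = 2 * deriv p 0 := by
    have hev : deriv g =ᶠ[nhds 0] fun z => p z + z * deriv p z := by
      filter_upwards [isOpen_ball.mem_nhds h0] with z hz
      have h1 := ((hasDerivAt_id z).mul
        (hp.differentiableAt (isOpen_ball.mem_nhds hz)).hasDerivAt).const_add (g 0)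
      have h2 : HasDerivAt g (p z + z * deriv p z) z := by
        convert! h1 using 1
        · exact funext fun z => hgp z
        · simp
      exact h2.deriv
    rw [hev.deriv_eq]
    have h1 := (hp.differentiableAt h01).hasDerivAt
    have h2 := (hasDerivAt_id (0 : ℂ)).mul ((hp.deriv isOpen_ball).differentiableAt h01).hasDerivAt
    have h3 := (h1.add h2).deriv
    simp only [id, one_mul, zero_mul, add_zero] at h3
    rw [two_mul]
    exact h3
  obtain ⟨k, hk, hk0, hkp⟩ := exists_sq_mul_eq_of_ne_zero hp hpne
  have hkne : ∀ z ∈ ball (0 : ℂ) 1, k z ≠ 0 := by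
    intro z hz h
    have := hkp z hz
    rw [h] at this
    exact hpne 0 h0 (by simpa using this.symm)
  have hk' : 2 * deriv k 0 * p 0 + deriv p 0 = 0 := by
    have h1 := (((hk.differentiableAt h01).hasDerivAt.pow 2).mul (hp.differentiableAt h01).hasDerivAt)
    have h2 : HasDerivAt (k ^ 2 * p) 0 0 := by
      refine (hasDerivAt_const (0 : ℂ) (p 0)).congr_of_eventuallyEq ?_
      filter_upwards [h01] with z hz using hkp z hz
    have h3 := h1.unique h2
    simpa [hk0] using h3
  set P : ℂ → ℂ := fun z => z * dslope k 0 (z ^ 2) with hPdef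
  have hsq : ∀ z ∈ ball (0 : ℂ) 1, z ^ 2 ∈ ball (0 : ℂ) 1 := by
    intro z hz
    simp only [mem_ball_zero_iff, norm_pow] at hz ⊢
    exact pow_lt_one₀ (norm_nonneg z) hz two_ne_zero
  have hds : DifferentiableOn ℂ (dslope k 0) (ball 0 1) :=
    (Complex.differentiableOn_dslope h01).2 hk
  have hds2 : DifferentiableOn ℂ (fun z : ℂ => dslope k 0 (z ^ 2)) (ball 0 1) :=
    hds.comp (differentiableOn_id.pow 2) hsq
  have hP : DifferentiableOn ℂ P (ball 0 1) := differentiableOn_id.mul hds2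
  have hP' : deriv P 0 = deriv k 0 := by
    have h1 := ((hasDerivAt_id (0 : ℂ)).mul (hds2.differentiableAt h01).hasDerivAt).deriv
    simpa using! h1
  have hGk : ∀ z : ℂ, z ≠ 0 → z⁻¹ + P z = k (z ^ 2) / z := by
    intro z hz
    have := sub_smul_dslope k 0 (z ^ 2)
    simp only [sub_zero, smul_eq_mul, hk0] at this
    rw [hPdef]
    field_simp
    rw [this]; ring
  have hGinj : Set.InjOn (fun z => z⁻¹ + P z) (ball 0 1 \ {0}) := by
    rintro x ⟨hx, hx0⟩ y ⟨hy, hy0⟩ hxy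
    simp only [Set.mem_singleton_iff] at hx0 hy0
    simp only [hGk x hx0, hGk y hy0] at hxy
    have hval : ∀ z ∈ ball (0 : ℂ) 1, z ≠ 0 → (k (z ^ 2) / z) ^ 2 * (g (z ^ 2) - g 0) = p 0 := by
      intro z hz hz0
      rw [hgp (z ^ 2), ← hkp _ (hsq z hz)]
      field_simp
      ring
    have h1 := hval x hx hx0
    rw [hxy, ← hval y hy hy0] at h1
    have h2 : (k (y ^ 2) / y) ^ 2 ≠ 0 := pow_ne_zero 2 (div_ne_zero (hkne _ (hsq y hy)) hy0)
    have h3 := mul_left_cancel₀ h2 h1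
    have h4 : x ^ 2 = y ^ 2 := hinj (hsq x hx) (hsq y hy) (by simpa using h3)
    rcases sq_eq_sq_iff_eq_or_eq_neg.1 h4 with h | h
    · exact h
    · exfalso
      rw [h4, h, div_neg] at hxy
      have h5 : k (y ^ 2) / y ≠ 0 := div_ne_zero (hkne _ (hsq y hy)) hy0
      exact h5 (self_eq_neg.1 hxy.symm)
  have hle := norm_deriv_le_one_of_injOn_inv_add hP (by simp [hPdef]) hGinj
  rw [hP'] at hle
  have h6 : deriv p 0 = -(2 * deriv k 0 * p 0) := by linear_combination hk'
  rw [hg2, h6, ← hp00]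
  simp only [norm_mul, norm_neg, Complex.norm_ofNat]
  nlinarith [norm_nonneg (p 0), mul_le_mul_of_nonneg_right hle (norm_nonneg (p 0))]

/-- The Koebe transform of Bieberbach's inequality, at points where the derivative is nonzero. -/
theorem norm_koebe_transform_le_of_deriv_ne_zero {g : ℂ → ℂ} (hg : DifferentiableOn ℂ g (ball 0 1))
    (hinj : Set.InjOn g (ball 0 1)) {a : ℂ} (ha : ‖a‖ < 1) (hga : deriv g a ≠ 0) :
    ‖(1 - ‖a‖ ^ 2 : ℝ) * deriv (deriv g) a - 2 * (starRingEnd ℂ) a * deriv g a‖ ≤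
      4 * ‖deriv g a‖ := by
  set c := (starRingEnd ℂ) a with hc
  have hcn : ‖c‖ < 1 := by simpa [hc] using ha
  have haa : a * c = ((‖a‖ ^ 2 : ℝ) : ℂ) := by
    rw [hc, Complex.mul_conj, Complex.normSq_eq_norm_sq]
  have hs : 0 < 1 - ‖a‖ ^ 2 := by nlinarith [norm_nonneg a]
  set s : ℂ := ((1 - ‖a‖ ^ 2 : ℝ) : ℂ) with hsdef
  have hsc : s = 1 - a * c := by rw [haa, hsdef]; push_cast; ring
  have hs0 : s ≠ 0 := by rw [hsdef]; exact_mod_cast hs.ne'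
  have hne : ∀ z ∈ ball (0 : ℂ) 1, 1 + c * z ≠ 0 := by
    intro z hz h
    have hz' : ‖z‖ < 1 := by simpa using hz
    have : ‖c * z‖ = 1 := by rw [show c * z = -1 by linear_combination h]; simp
    rw [norm_mul] at this
    nlinarith [norm_nonneg c, norm_nonneg z]
  set φ : ℂ → ℂ := fun z => (z + a) / (1 + c * z) with hφ
  have hφd : ∀ z ∈ ball (0 : ℂ) 1, HasDerivAt φ (s / (1 + c * z) ^ 2) z := by
    intro z hz
    convert! ((hasDerivAt_id z).add_const a).div (((hasDerivAt_id z).const_mul c).const_add 1)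
      (hne z hz) using 1
    rw [hsc]; simp; ring
  have hφm : Set.MapsTo φ (ball 0 1) (ball 0 1) := by
    intro z hz
    have hz' : ‖z‖ < 1 := by simpa using hz
    have h1 : 0 < ‖1 + c * z‖ := norm_pos_iff.2 (hne z hz)
    rw [mem_ball_zero_iff, hφ, norm_div, div_lt_one h1, ← sq_lt_sq₀ (norm_nonneg _) h1.le]
    rw [← Complex.normSq_eq_norm_sq, ← Complex.normSq_eq_norm_sq, Complex.normSq_add,
      Complex.normSq_add]
    simp only [map_mul, map_one, hc, Complex.conj_conj, Complex.normSq_conj, one_mul]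
    rw [show (z * (starRingEnd ℂ) a).re = (a * (starRingEnd ℂ) z).re by simp; ring,
      Complex.normSq_eq_norm_sq, Complex.normSq_eq_norm_sq]
    nlinarith [mul_pos hs (show 0 < 1 - ‖z‖ ^ 2 by nlinarith [norm_nonneg z])]
  have hφi : Set.InjOn φ (ball 0 1) := by
    intro x hx y hy hxy
    simp only [hφ] at hxy
    rw [div_eq_div_iff (hne x hx) (hne y hy)] at hxy
    have : s * (x - y) = 0 := by rw [hsc]; linear_combination hxy
    rcases mul_eq_zero.1 this with h | h
    · exact absurd h hs0
    · exact sub_eq_zero.1 h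
  have h0 : (0 : ℂ) ∈ ball (0 : ℂ) 1 := mem_ball_self one_pos
  have hφ0 : φ 0 = a := by simp [hφ]
  have hcomp : DifferentiableOn ℂ (g ∘ φ) (ball 0 1) :=
    hg.comp (fun z hz => (hφd z hz).differentiableAt.differentiableWithinAt) hφm
  have hgd : ∀ z ∈ ball (0 : ℂ) 1, HasDerivAt g (deriv g z) z := fun z hz =>
    (hg.differentiableAt (isOpen_ball.mem_nhds hz)).hasDerivAt
  have hgd2 : ∀ z ∈ ball (0 : ℂ) 1, HasDerivAt (deriv g) (deriv (deriv g) z) z := fun z hz =>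
    ((hg.deriv isOpen_ball).differentiableAt (isOpen_ball.mem_nhds hz)).hasDerivAt
  have hd1 : ∀ z ∈ ball (0 : ℂ) 1,
      deriv (g ∘ φ) z = deriv g (φ z) * (s / (1 + c * z) ^ 2) := fun z hz =>
    ((hgd _ (hφm hz)).comp z (hφd z hz)).deriv
  have hd10 : deriv (g ∘ φ) 0 = deriv g a * s := by rw [hd1 0 h0, hφ0]; simp
  have hd2 : deriv (deriv (g ∘ φ)) 0 = s * (s * deriv (deriv g) a - 2 * c * deriv g a) := by
    have hev : deriv (g ∘ φ) =ᶠ[nhds 0] fun z => deriv g (φ z) * (s / (1 + c * z) ^ 2) := by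
      filter_upwards [isOpen_ball.mem_nhds h0] with z hz using hd1 z hz
    rw [hev.deriv_eq]
    have e1 := (hgd2 _ (hφm h0)).comp (0 : ℂ) (hφd 0 h0)
    have e2 : HasDerivAt (fun z : ℂ => s / (1 + c * z) ^ 2) (-2 * c * s) 0 := by
      convert! (hasDerivAt_const (0 : ℂ) s).div
        ((((hasDerivAt_id (0 : ℂ)).const_mul c).const_add 1).pow 2) (by simp) using 1
      simp; ring
    have e3 := (e1.mul e2).deriv
    refine e3.trans ?_
    simp [hφ0]
    ring
  have hB := norm_deriv_deriv_zero_le_of_injOn hcomp (hinj.comp hφi hφm)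
    (by rw [hd10]; exact mul_ne_zero hga hs0)
  rw [hd10, hd2, norm_mul, norm_mul] at hB
  have hspos : 0 < ‖s‖ := norm_pos_iff.2 hs0
  nlinarith [hB]

/-- The Koebe transform of Bieberbach's inequality. -/
theorem norm_koebe_transform_le {g : ℂ → ℂ} (hg : DifferentiableOn ℂ g (ball 0 1))
    (hinj : Set.InjOn g (ball 0 1)) {a : ℂ} (ha : ‖a‖ < 1) :
    ‖(1 - ‖a‖ ^ 2 : ℝ) * deriv (deriv g) a - 2 * (starRingEnd ℂ) a * deriv g a‖ ≤
      4 * ‖deriv g a‖ := by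
  have haB : ball (0 : ℂ) 1 ∈ nhds a := isOpen_ball.mem_nhds (by simpa using ha)
  have hg' := hg.deriv isOpen_ball
  rcases (hg'.analyticAt haB).eventually_eq_zero_or_eventually_ne_zero with h | h
  · exfalso
    obtain ⟨ε, hε, hεs⟩ := Metric.eventually_nhds_iff_ball.1 (h.and haB)
    have hmem : a + (ε / 2 : ℝ) ∈ ball a ε := by
      simp [abs_of_pos hε, hε]
    have hconst : g (a + (ε / 2 : ℝ)) = g a :=
      isOpen_ball.is_const_of_deriv_eq_zero (convex_ball a ε).isPreconnected
        (hg.mono fun z hz => (hεs z hz).2) (fun z hz => (hεs z hz).1) hmem (mem_ball_self hε)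
    have := hinj (hεs _ hmem).2 (mem_of_mem_nhds haB) hconst
    simp at this
    exact hε.ne' this
  · have c1 := (hg'.differentiableAt haB).continuousAt
    have c2 := ((hg'.deriv isOpen_ball).differentiableAt haB).continuousAt
    refine le_of_tendsto_of_tendsto (b := nhdsWithin a {a}ᶜ)
      (f := fun a => ‖(1 - ‖a‖ ^ 2 : ℝ) * deriv (deriv g) a - 2 * (starRingEnd ℂ) a * deriv g a‖)
      (g := fun a => 4 * ‖deriv g a‖) ?_ ?_ ?_
    · refine (ContinuousAt.tendsto ?_).mono_left nhdsWithin_le_nhds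
      fun_prop
    · refine (ContinuousAt.tendsto ?_).mono_left nhdsWithin_le_nhds
      fun_prop
    · filter_upwards [h, nhdsWithin_le_nhds haB] with z hz hzb
      exact norm_koebe_transform_le_of_deriv_ne_zero hg hinj (by simpa using hzb) hz

/-- Koebe's distortion theorem: the upper bound for the derivative of a univalent function. -/
theorem norm_deriv_le_of_injOn {g : ℂ → ℂ} (hg : DifferentiableOn ℂ g (ball 0 1))
    (hinj : Set.InjOn g (ball 0 1)) {ω : ℂ} (hω : ‖ω‖ = 1) {r : ℝ} (hr0 : 0 ≤ r) (hr1 : r < 1) :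
    ‖deriv g (r * ω)‖ ≤ ‖deriv g 0‖ * ((1 + r) / (1 - r) ^ 3) := by
  have hmem : ∀ t ∈ Set.Ico (0 : ℝ) 1, (t : ℂ) * ω ∈ ball (0 : ℂ) 1 := by
    intro t ht
    simpa [hω, abs_of_nonneg ht.1] using ht.2
  have hωc : ω * (starRingEnd ℂ) ω = 1 := by
    rw [Complex.mul_conj, Complex.normSq_eq_norm_sq, hω]; simp
  set q : ℝ → ℝ := fun t => (1 - t) ^ 3 / (1 + t) with hq
  have hqd : ∀ t ∈ Set.Ico (0 : ℝ) 1,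
      HasDerivAt q (-(1 - t) ^ 2 * (2 * t + 4) / (1 + t) ^ 2) t := by
    intro t ht
    have ht' : 1 + t ≠ 0 := by linarith [ht.1]
    convert! (((hasDerivAt_id t).const_sub 1).pow 3).div ((hasDerivAt_id t).const_add 1) ht' using 1
    simp; ring
  have hNd : ∀ t ∈ Set.Ico (0 : ℝ) 1, HasDerivAt (fun t : ℝ => ‖deriv g (t * ω)‖ ^ 2)
      (2 * inner ℝ (deriv g (t * ω)) (ω * deriv (deriv g) (t * ω))) t := by
    intro t ht
    have h1 : HasDerivAt (fun t : ℝ => (t : ℂ) * ω) ω t := by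
      simpa using (Complex.ofRealCLM.hasDerivAt (x := t)).mul_const ω
    have h2 := ((hg.deriv isOpen_ball).differentiableAt
      (isOpen_ball.mem_nhds (hmem t ht))).hasDerivAt
    have h3 := (h2.scomp t h1).norm_sq
    simpa using! h3
  have hKoebe : ∀ t ∈ Set.Ico (0 : ℝ) 1,
      (1 - t ^ 2) * inner ℝ (deriv g (t * ω)) (ω * deriv (deriv g) (t * ω)) ≤
        (2 * t + 4) * ‖deriv g (t * ω)‖ ^ 2 := by
    intro t ht
    have h1 := norm_koebe_transform_le hg hinj (mem_ball_zero_iff.1 (hmem t ht))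
    have hn : ‖(t : ℂ) * ω‖ = t := by simp [hω, abs_of_nonneg ht.1]
    rw [hn] at h1
    set G := deriv g (t * ω)
    set G2 := deriv (deriv g) (t * ω)
    have h2 := real_inner_le_norm G (ω * (((1 - t ^ 2 : ℝ) : ℂ) * G2 -
      2 * (starRingEnd ℂ) (t * ω) * G))
    have h3 : ω * (((1 - t ^ 2 : ℝ) : ℂ) * G2 - 2 * (starRingEnd ℂ) (t * ω) * G) =
        (1 - t ^ 2) • (ω * G2) - (2 * t) • G := by
      simp only [Complex.real_smul, map_mul, Complex.conj_ofReal]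
      push_cast
      linear_combination (-2 * t * G) * hωc
    rw [norm_mul, hω, one_mul, h3, inner_sub_right, real_inner_smul_right, real_inner_smul_right,
      real_inner_self_eq_norm_sq] at h2
    nlinarith [mul_le_mul_of_nonneg_left h1 (norm_nonneg G)]
  have hHd : ∀ t ∈ Set.Ico (0 : ℝ) 1, HasDerivAt (fun t : ℝ => ‖deriv g (t * ω)‖ ^ 2 * q t ^ 2)
      (2 * (1 - t) ^ 5 / (1 + t) ^ 3 * ((1 - t ^ 2) *
        inner ℝ (deriv g (t * ω)) (ω * deriv (deriv g) (t * ω)) -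
        (2 * t + 4) * ‖deriv g (t * ω)‖ ^ 2)) t := by
    intro t ht
    have ht' : 1 + t ≠ 0 := by linarith [ht.1]
    convert! (hNd t ht).mul ((hqd t ht).pow 2) using 1
    simp only [hq, Pi.pow_apply, Nat.add_one_sub_one, pow_one, Nat.cast_ofNat]
    field_simp
    ring
  have hanti : AntitoneOn (fun t : ℝ => ‖deriv g (t * ω)‖ ^ 2 * q t ^ 2) (Set.Ico 0 1) := by
    refine antitoneOn_of_deriv_nonpos (convex_Ico 0 1)
      (fun t ht => (hHd t ht).continuousAt.continuousWithinAt) ?_ ?_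
    · exact fun t ht => (hHd t (interior_subset ht)).differentiableAt.differentiableWithinAt
    · intro t ht
      have ht := interior_subset ht
      rw [(hHd t ht).deriv]
      have h1 : 0 ≤ 1 - t := by linarith [ht.2]
      have h2 : 0 ≤ 1 + t := by linarith [ht.1]
      exact mul_nonpos_of_nonneg_of_nonpos (by positivity) (by linarith [hKoebe t ht])
  have hle := hanti ⟨le_rfl, one_pos⟩ ⟨hr0, hr1⟩ hr0
  simp only [hq, ← mul_pow] at hle
  have h1 : 0 < 1 - r := by linarith
  have h2 : 0 < 1 + r := by linarith
  have hle' := (sq_le_sq₀ (by positivity) (by positivity)).1 hle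
  simp only [Complex.ofReal_zero, zero_mul, sub_zero, one_pow, add_zero, div_one, mul_one] at hle'
  rw [← mul_div_assoc, div_le_iff₀ h2] at hle'
  rw [← mul_div_assoc, le_div_iff₀ (by positivity)]
  exact hle'

/-- Koebe's growth theorem: the upper bound for a univalent function. -/
theorem norm_sub_le_of_injOn {g : ℂ → ℂ} (hg : DifferentiableOn ℂ g (ball 0 1))
    (hinj : Set.InjOn g (ball 0 1)) {w : ℂ} (hw : w ∈ ball (0 : ℂ) 1) :
    ‖g w - g 0‖ ≤ ‖deriv g 0‖ * (‖w‖ / (1 - ‖w‖) ^ 2) := by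
  by_cases hw0 : w = 0
  · simp [hw0]
  have hw1 : ‖w‖ < 1 := mem_ball_zero_iff.1 hw
  have hwn : ‖w‖ ≠ 0 := norm_ne_zero_iff.2 hw0
  set ω : ℂ := w / ‖w‖ with hωdef
  have hω : ‖ω‖ = 1 := by simp [hωdef, hwn]
  have hwω : (‖w‖ : ℂ) * ω = w := by
    rw [hωdef]
    exact mul_div_cancel₀ w (by exact_mod_cast hwn)
  have hmem : ∀ t ∈ Set.Icc (0 : ℝ) ‖w‖, (t : ℂ) * ω ∈ ball (0 : ℂ) 1 := by
    intro t ht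
    simpa [hω, abs_of_nonneg ht.1] using ht.2.trans_lt hw1
  have hFd : ∀ t ∈ Set.Icc (0 : ℝ) ‖w‖,
      HasDerivAt (fun t : ℝ => g (t * ω) - g 0) (ω * deriv g (t * ω)) t := by
    intro t ht
    have h1 : HasDerivAt (fun t : ℝ => (t : ℂ) * ω) ω t := by
      simpa using (Complex.ofRealCLM.hasDerivAt (x := t)).mul_const ω
    have h2 := (hg.differentiableAt (isOpen_ball.mem_nhds (hmem t ht))).hasDerivAt
    simpa using! (h2.scomp t h1).sub_const (g 0)
  have hBd : ∀ t ∈ Set.Icc (0 : ℝ) ‖w‖,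
      HasDerivAt (fun t : ℝ => ‖deriv g 0‖ * (t / (1 - t) ^ 2))
        (‖deriv g 0‖ * ((1 + t) / (1 - t) ^ 3)) t := by
    intro t ht
    have ht' : 1 - t ≠ 0 := by linarith [ht.2]
    convert! ((hasDerivAt_id t).div (((hasDerivAt_id t).const_sub 1).pow 2)
      (pow_ne_zero 2 ht')).const_mul ‖deriv g 0‖ using 1
    simp
    field_simp
    exact Or.inl (by ring)
  have h := image_norm_le_of_norm_deriv_right_le_deriv_boundary'
    (f := fun t : ℝ => g (t * ω) - g 0) (a := 0) (b := ‖w‖)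
    (fun t ht => (hFd t ht).continuousAt.continuousWithinAt)
    (fun t ht => (hFd t (Set.Ico_subset_Icc_self ht)).hasDerivWithinAt) (by simp)
    (fun t ht => (hBd t ht).continuousAt.continuousWithinAt)
    (fun t ht => (hBd t (Set.Ico_subset_Icc_self ht)).hasDerivWithinAt)
    (fun t ht => by
      rw [norm_mul, hω, one_mul]
      exact norm_deriv_le_of_injOn hg hinj hω ht.1 (ht.2.trans hw1))
    (Set.right_mem_Icc.2 (norm_nonneg w))
  simpa [hwω] using h

/-- Upper Pick growth bound for bounded univalent functions. -/
theorem stmt10 (f : ℂ → ℂ) (hd : DifferentiableOn ℂ f (ball (0 : ℂ) 1))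
    (hmaps : Set.MapsTo f (ball (0 : ℂ) 1) (ball (0 : ℂ) 1))
    (hinj : Set.InjOn f (ball (0 : ℂ) 1))
    (h0 : f 0 = 0) (w : ℂ) (hw : w ∈ ball (0 : ℂ) 1) (hw0 : w ≠ 0) :
    ‖f w‖ / (1 - ‖f w‖) ^ 2 ≤ ‖deriv f 0‖ * (‖w‖ / (1 - ‖w‖) ^ 2) := by
  have hz0 : (0 : ℂ) ∈ ball (0 : ℂ) 1 := mem_ball_self one_pos
  have hfw : f w ≠ 0 := fun h => hw0 (hinj hw hz0 (h.trans h0.symm))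
  have hfn : ‖f w‖ ≠ 0 := norm_ne_zero_iff.2 hfw
  set α : ℂ := ‖f w‖ / f w with hα
  have hαn : ‖α‖ = 1 := by simp [hα, hfn]
  have hαf : α * f w = ‖f w‖ := div_mul_cancel₀ _ hfw
  have hne : ∀ z ∈ ball (0 : ℂ) 1, 1 - α * z ≠ 0 := by
    intro z hz h
    have h1 : ‖α * z‖ = 1 := by rw [← sub_eq_zero.1 h, norm_one]
    rw [norm_mul, hαn, one_mul] at h1
    exact (mem_ball_zero_iff.1 hz).ne h1
  set k : ℂ → ℂ := fun z => z / (1 - α * z) ^ 2 with hk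
  have hkd : DifferentiableOn ℂ k (ball 0 1) := by
    intro z hz
    have := pow_ne_zero 2 (hne z hz)
    exact (by fun_prop (disch := assumption) : DifferentiableAt ℂ k z).differentiableWithinAt
  have hk0 : HasDerivAt k 1 0 := by
    convert! (hasDerivAt_id (0 : ℂ)).div
      ((((hasDerivAt_id (0 : ℂ)).const_mul α).const_sub 1).pow 2) (by simp) using 1
    simp
  have hkinj : Set.InjOn k (ball 0 1) := by
    intro x hx y hy hxy
    simp only [hk] at hxy
    rw [div_eq_div_iff (pow_ne_zero 2 (hne x hx)) (pow_ne_zero 2 (hne y hy))] at hxy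
    have h1 : (x - y) * (1 - (α * x) * (α * y)) = 0 := by linear_combination hxy
    rcases mul_eq_zero.1 h1 with h | h
    · exact sub_eq_zero.1 h
    · exfalso
      have h2 : ‖(α * x) * (α * y)‖ = 1 := by rw [← sub_eq_zero.1 h, norm_one]
      simp only [norm_mul, hαn, one_mul] at h2
      nlinarith [mem_ball_zero_iff.1 hx, mem_ball_zero_iff.1 hy, norm_nonneg x, norm_nonneg y]
  have hderiv : deriv (k ∘ f) 0 = deriv f 0 := by
    have h1 := (hd.differentiableAt (ball_mem_nhds _ one_pos)).hasDerivAt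
    rw [← h0] at hk0
    simpa using (hk0.comp 0 h1).deriv
  have h := norm_sub_le_of_injOn (hkd.comp hd hmaps) (hkinj.comp hinj hmaps) hw
  rw [hderiv] at h
  have h2 : ‖(1 : ℂ) - ‖f w‖‖ = 1 - ‖f w‖ := by
    rw [← Complex.ofReal_one, ← Complex.ofReal_sub, Complex.norm_real, Real.norm_eq_abs,
      abs_of_pos (sub_pos.2 (mem_ball_zero_iff.1 (hmaps hw)))]
  simpa [hk, h0, hαf, h2] using h
end
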